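/- arXiv:1306.4236 — 4 statements merged into one kernel-verified Lean document; each statement's English description precedes it below -/
import Mathlib

section
/- For every integer k > 2 there exist constants R = R(k) and s0 = s0(k) such that for every integer s > s0: if F is a k-uniform [R,s]-almost intersecting hypergraph with at least (s+1)·(2k-2 choose k-1) edges, then there exists a set S of 2k-2 vertices such that every edge of F intersects S in exactly k-1 elements, and every (k-1)-element subset of S is contained in exactly s+1 edges of F. -/
universe u

/-- Under the numbering `π`, every element of `U` precedes every element of `T`. -/
abbrev Precedes {α : Type*} [Fintype α] (π : α ≃ Fin (Fintype.card α)) (U T : Finset α) : Prop :=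
  ∀ x ∈ U, ∀ y ∈ T, π x < π y

section Numberings

variable {α : Type*} [Fintype α]

theorem Precedes.disjoint {π : α ≃ Fin (Fintype.card α)} {U T : Finset α}
    (h : Precedes π U T) : Disjoint U T :=
  Finset.disjoint_left.2 fun x hU hT => lt_irrefl _ (h x hU x hT)

theorem exists_precedes_minimal (π : α ≃ Fin (Fintype.card α)) {𝒰 : Finset (Finset α)}
    (h𝒰 : 𝒰.Nonempty) :
    ∃ U₀ ∈ 𝒰, ∀ U ∈ 𝒰, ∀ T, Precedes π U T → Precedes π U₀ T := by
  obtain ⟨U₀, hU₀, hmin⟩ :=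
    Finset.exists_min_image 𝒰 (fun U => U.sup fun x => (π x : ℕ) + 1) h𝒰
  refine ⟨U₀, hU₀, fun U hU T hT x hx y hy => ?_⟩
  have h1 : (π x : ℕ) + 1 ≤ U₀.sup fun x => (π x : ℕ) + 1 :=
    Finset.le_sup (f := fun x => (π x : ℕ) + 1) hx
  have h2 : (U.sup fun x => (π x : ℕ) + 1) ≤ (π y : ℕ) :=
    Finset.sup_le fun z hz => hT z hz y hy
  exact h1.trans ((hmin U hU).trans h2)

theorem exists_numbering_of_rank (r : α → ℕ) :
    ∃ π : α ≃ Fin (Fintype.card α), ∀ x y, r x < r y → π x < π y := by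
  let e := Fintype.equivFin α
  refine ⟨e.trans (Tuple.sort (r ∘ e.symm)).symm, fun x y hxy => ?_⟩
  by_contra! hle
  have := Tuple.monotone_sort (r ∘ e.symm) hle
  simp at this
  omega

theorem card_le_card_mul_of_trans_mem (P P' : Finset (α ≃ Fin (Fintype.card α)))
    (H : Finset (Equiv.Perm α)) (h : ∀ π ∈ P, ∃ g ∈ H, g.trans π ∈ P') :
    P.card ≤ H.card * P'.card := by
  rw [← Finset.card_product]
  refine Finset.card_le_card_of_surjOn (fun p => p.1.symm.trans p.2) fun π hπ => ?_
  obtain ⟨g, hg, hgπ⟩ := h π hπ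
  refine ⟨(g, g.trans π), by simp [hg, hgπ], ?_⟩
  ext x
  simp

variable [DecidableEq α]

/-- Double counting of the pairs `(A, π)` such that some member of `𝒰` precedes `τ A`. -/
theorem sum_card_precedes_le {ι : Type*} (F : Finset ι) (τ : ι → Finset α)
    (𝒰 : Finset (Finset α)) (W : ℕ)
    (hW : ∀ U ∈ 𝒰, (F.filter fun A => Disjoint U (τ A)).card ≤ W) :
    ∑ A ∈ F, (Finset.univ.filter fun π => ∃ U ∈ 𝒰, Precedes π U (τ A)).card ≤
      Fintype.card (α ≃ Fin (Fintype.card α)) * W := by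
  have := Finset.sum_card_bipartiteAbove_eq_sum_card_bipartiteBelow
    (s := F) (t := (Finset.univ : Finset (α ≃ Fin (Fintype.card α))))
    (fun A π => ∃ U ∈ 𝒰, Precedes π U (τ A))
  unfold Finset.bipartiteAbove Finset.bipartiteBelow at this
  rw [this, ← smul_eq_mul]
  refine Finset.sum_le_card_nsmul Finset.univ _ _ fun π _ => ?_
  rcases 𝒰.eq_empty_or_nonempty with rfl | h𝒰
  · simp
  obtain ⟨U₀, hU₀, hmin⟩ := exists_precedes_minimal π h𝒰
  refine le_trans (Finset.card_le_card fun A hA => ?_) (hW U₀ hU₀)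
  rw [Finset.mem_filter] at hA ⊢
  obtain ⟨hA, U, hU, hUA⟩ := hA
  exact ⟨hA, (hmin U hU _ hUA).disjoint⟩

theorem exists_initial_subset (π : α ≃ Fin (Fintype.card α)) (Q : Finset α) (b : ℕ)
    (hb : b ≤ Q.card) : ∃ A ⊆ Q, A.card = b ∧ Precedes π A (Q \ A) := by
  induction b with
  | zero => exact ⟨∅, by simp, by simp, by simp [Precedes]⟩
  | succ b ih =>
    obtain ⟨A, hAQ, hA, hlt⟩ := ih (by omega)
    have hne : (Q \ A).Nonempty := by
      rw [← Finset.card_pos, Finset.card_sdiff_of_subset hAQ]; omega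
    obtain ⟨z, hz, hmin⟩ := Finset.exists_min_image (Q \ A) π hne
    have hz' := Finset.mem_sdiff.1 hz
    refine ⟨insert z A, Finset.insert_subset hz'.1 hAQ, by simp [hz'.2, hA], fun x hx y hy => ?_⟩
    simp only [Finset.mem_sdiff, Finset.mem_insert, not_or] at hx hy
    have hy' : y ∈ Q \ A := Finset.mem_sdiff.2 ⟨hy.1, hy.2.2⟩
    rcases hx with rfl | hx
    · exact lt_of_le_of_ne (hmin y hy') fun h => hy.2.1 (π.injective h).symm
    · exact hlt x hx y hy'

theorem exists_perm_map_eq (U T A : Finset α) (hUT : Disjoint U T) (hA : A ⊆ U ∪ T)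
    (hcard : A.card = U.card) :
    ∃ g : Equiv.Perm α, (∀ x ∉ U ∪ T, g x = x) ∧ (∀ x ∈ U, g x ∈ A) ∧
      ∀ x ∈ T, g x ∈ (U ∪ T) \ A := by
  have e : {x : ↥(U ∪ T) // x.1 ∈ U} ≃ {x : ↥(U ∪ T) // x.1 ∈ A} := by
    refine Fintype.equivOfCardEq ?_
    rw [Fintype.card_subtype, Fintype.card_subtype]
    have key : ∀ B ⊆ U ∪ T,
        (Finset.univ.filter fun x : ↥(U ∪ T) => x.1 ∈ B).card = B.card := by
      intro B hB
      rw [← Finset.card_map (Function.Embedding.subtype _)]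
      congr 1
      ext x
      simp only [Finset.mem_map, Finset.mem_filter, Finset.mem_univ, true_and,
        Function.Embedding.subtype_apply]
      exact ⟨fun ⟨y, hy, h⟩ => h ▸ hy, fun h => ⟨⟨x, hB h⟩, h, rfl⟩⟩
    rw [key U Finset.subset_union_left, key A hA, hcard]
  refine ⟨Equiv.Perm.ofSubtype e.extendSubtype, fun x hx => ?_, fun x hx => ?_, fun x hx => ?_⟩
  · exact Equiv.Perm.ofSubtype_apply_of_not_mem _ hx
  · have hx' : x ∈ U ∪ T := Finset.mem_union_left _ hx
    rw [Equiv.Perm.ofSubtype_apply_of_mem _ hx']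
    exact e.extendSubtype_mem ⟨x, hx'⟩ hx
  · have hx' : x ∈ U ∪ T := Finset.mem_union_right _ hx
    rw [Equiv.Perm.ofSubtype_apply_of_mem _ hx', Finset.mem_sdiff]
    exact ⟨Subtype.property _,
      e.extendSubtype_not_mem ⟨x, hx'⟩ fun h => Finset.disjoint_left.1 hUT h hx⟩

/-- Few permutations of `U ∪ T` suffice to bring `U` in front of `T` in any numbering. -/
theorem exists_perms_precedes (U T : Finset α) (hUT : Disjoint U T) :
    ∃ H : Finset (Equiv.Perm α), H.card ≤ (U.card + T.card).choose U.card ∧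
      (∀ g ∈ H, ∀ x ∉ U ∪ T, g x = x) ∧
      ∀ π : α ≃ Fin (Fintype.card α), ∃ g ∈ H, Precedes (g.trans π) U T := by
  choose! g hg using fun A (hA : A ∈ (U ∪ T).powersetCard U.card) =>
    exists_perm_map_eq U T A hUT (Finset.mem_powersetCard.1 hA).1 (Finset.mem_powersetCard.1 hA).2
  refine ⟨((U ∪ T).powersetCard U.card).image g, ?_, ?_, fun π => ?_⟩
  · refine Finset.card_image_le.trans ?_
    rw [Finset.card_powersetCard, Finset.card_union_of_disjoint hUT]
  · intro h hh
    obtain ⟨A, hA, rfl⟩ := Finset.mem_image.1 hh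
    exact (hg A hA).1
  · obtain ⟨A, hAQ, hA, hlt⟩ := exists_initial_subset π (U ∪ T) U.card
      (Finset.card_le_card Finset.subset_union_left)
    have hA' := Finset.mem_powersetCard.2 ⟨hAQ, hA⟩
    exact ⟨g A, Finset.mem_image_of_mem g hA', fun x hx y hy =>
      hlt _ ((hg A hA').2.1 x hx) _ ((hg A hA').2.2 y hy)⟩

theorem card_numberings_le (U T : Finset α) (hUT : Disjoint U T) :
    Fintype.card (α ≃ Fin (Fintype.card α)) ≤ (U.card + T.card).choose U.card *
      (Finset.univ.filter fun π : α ≃ Fin (Fintype.card α) => Precedes π U T).card := by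
  obtain ⟨H, hH, -, hH'⟩ := exists_perms_precedes U T hUT
  rw [← Finset.card_univ]
  refine (card_le_card_mul_of_trans_mem _ _ H fun π _ => ?_).trans (Nat.mul_le_mul_right _ hH)
  simpa using hH' π

theorem card_numberings_le_three (U T : Finset α) (x : α) (hUT : Disjoint U T)
    (hx : x ∉ U ∪ T) :
    Fintype.card (α ≃ Fin (Fintype.card α)) ≤
      (U.card + T.card + 1) * ((U.card + T.card).choose U.card *
      (Finset.univ.filter fun π : α ≃ Fin (Fintype.card α) =>
        Precedes π U T ∧ Precedes π (U ∪ T) {x}).card) := by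
  have h1 := card_numberings_le (U ∪ T) {x} (by simpa using hx)
  rw [Finset.card_singleton, Nat.choose_succ_self_right, Finset.card_union_of_disjoint hUT] at h1
  refine h1.trans (Nat.mul_le_mul_left _ ?_)
  obtain ⟨H, hH, hfix, hH'⟩ := exists_perms_precedes U T hUT
  refine (card_le_card_mul_of_trans_mem _ _ H fun π hπ => ?_).trans (Nat.mul_le_mul_right _ hH)
  obtain ⟨g, hg, hgπ⟩ := hH' π
  refine ⟨g, hg, ?_⟩
  simp only [Finset.mem_filter, Finset.mem_univ, true_and] at hπ ⊢
  refine ⟨hgπ, fun y hy z hz => ?_⟩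
  rw [Finset.mem_singleton] at hz
  subst hz
  have hgy : g y ∈ U ∪ T := by
    by_contra hgy
    exact hgy ((g.injective (hfix g hg _ hgy)).symm ▸ hy)
  simpa [hfix g hg z hx] using hπ (g y) hgy z (by simp)

end Numberings


section SetPairs

variable {α : Type*} [Fintype α] [DecidableEq α]

theorem card_filter_precedes_le_one {𝒰 : Finset (Finset α)} {t : Finset α → Finset α}
    (h : ∀ U ∈ 𝒰, ∀ U' ∈ 𝒰, Disjoint U (t U') → U = U') (π : α ≃ Fin (Fintype.card α)) :
    (𝒰.filter fun U => Precedes π U (t U)).card ≤ 1 := by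
  rcases 𝒰.eq_empty_or_nonempty with rfl | h𝒰
  · simp
  obtain ⟨U₀, hU₀, hmin⟩ := exists_precedes_minimal π h𝒰
  have key : ∀ U ∈ 𝒰.filter fun U => Precedes π U (t U), U₀ = U := fun U hU => by
    rw [Finset.mem_filter] at hU
    exact h U₀ hU₀ U hU.1 (hmin U hU.1 _ hU.2).disjoint
  exact Finset.card_le_one.2 fun U hU U' hU' => (key U hU).symm.trans (key U' hU')

/-- Bollobás' inequality for set pairs `(U, t U)` of equal sizes; in the case of equality every
numbering separates exactly one pair. -/
theorem setPairs_extremal {𝒰 : Finset (Finset α)} {t : Finset α → Finset α} {n : ℕ}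
    (hU : ∀ U ∈ 𝒰, U.card = n) (ht : ∀ U ∈ 𝒰, (t U).card = n)
    (hdisj : ∀ U ∈ 𝒰, Disjoint U (t U))
    (h : ∀ U ∈ 𝒰, ∀ U' ∈ 𝒰, Disjoint U (t U') → U = U')
    (hcard : (2 * n).choose n ≤ 𝒰.card) :
    𝒰.card = (2 * n).choose n ∧
      ∀ π : α ≃ Fin (Fintype.card α), ∃ U ∈ 𝒰, Precedes π U (t U) := by
  set C := (2 * n).choose n with hC
  have hCpos : 0 < C := Nat.choose_pos (by omega)
  have hdc := Finset.sum_card_bipartiteAbove_eq_sum_card_bipartiteBelow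
    (s := 𝒰) (t := (Finset.univ : Finset (α ≃ Fin (Fintype.card α))))
    (fun U π => Precedes π U (t U))
  unfold Finset.bipartiteAbove Finset.bipartiteBelow at hdc
  have hΩ : 0 < Fintype.card (α ≃ Fin (Fintype.card α)) :=
    Fintype.card_pos_iff.2 ⟨Fintype.equivFin α⟩
  have hlow : 𝒰.card * Fintype.card (α ≃ Fin (Fintype.card α)) ≤
      C * ∑ U ∈ 𝒰, (Finset.univ.filter fun π => Precedes π U (t U)).card := by
    rw [Finset.mul_sum, ← smul_eq_mul]
    refine Finset.card_nsmul_le_sum _ _ _ fun U hU' => ?_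
    have := card_numberings_le U (t U) (hdisj U hU')
    rwa [hU U hU', ht U hU', ← two_mul] at this
  have hup : ∀ π ∈ (Finset.univ : Finset (α ≃ Fin (Fintype.card α))),
      (𝒰.filter fun U => Precedes π U (t U)).card ≤ 1 :=
    fun π _ => card_filter_precedes_le_one h π
  have hsum := Finset.sum_le_sum hup
  simp only [Finset.sum_const, Finset.card_univ, smul_eq_mul, mul_one] at hsum
  refine ⟨le_antisymm ?_ hcard, fun π => ?_⟩
  · rw [hdc] at hlow
    exact Nat.le_of_mul_le_mul_right (hlow.trans (Nat.mul_le_mul_left _ hsum)) hΩ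
  · by_contra! hπ
    have hlt : ∑ π : α ≃ Fin (Fintype.card α), (𝒰.filter fun U => Precedes π U (t U)).card <
        ∑ _π : α ≃ Fin (Fintype.card α), 1 :=
      Finset.sum_lt_sum hup ⟨π, Finset.mem_univ _, by
        rw [Finset.filter_false_of_mem hπ]; simp⟩
    simp only [Finset.sum_const, Finset.card_univ, smul_eq_mul, mul_one] at hlt
    rw [hdc] at hlow
    have h1 := Nat.mul_lt_mul_of_pos_left hlt hCpos
    have h2 := Nat.mul_le_mul_right (Fintype.card (α ≃ Fin (Fintype.card α))) hcard
    exact lt_irrefl _ ((h2.trans hlow).trans_lt h1)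

theorem exists_precedes_swap {𝒰 : Finset (Finset α)} {t : Finset α → Finset α}
    (h : ∀ U ∈ 𝒰, ∀ U' ∈ 𝒰, Disjoint U (t U') → U = U')
    (hex : ∀ π : α ≃ Fin (Fintype.card α), ∃ U ∈ 𝒰, Precedes π U (t U))
    {U : Finset α} (hU : U ∈ 𝒰) {a b : α} (ha : a ∈ t U) (hb : b ∈ U)
    {π : α ≃ Fin (Fintype.card α)} (hπ : Precedes π U (t U))
    (hab : ∀ x, x ≠ a → x ≠ b → (π x < π b ∧ π x < π a) ∨ (π a < π x ∧ π b < π x)) :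
    ∃ U' ∈ 𝒰, a ∈ U' ∧ b ∈ t U' ∧
      (∀ x ∈ U', x ≠ a → π x < π b) ∧ ∀ y ∈ t U', y ≠ b → π a < π y := by
  have hlt : π b < π a := hπ b hb a ha
  have hne : a ≠ b := fun e => by simp [e] at hlt
  obtain ⟨U', hU', hpre⟩ := hex ((Equiv.swap a b).trans π)
  have hval : ∀ x, x ≠ a → x ≠ b → ((Equiv.swap a b).trans π) x = π x := fun x h1 h2 => by
    simp [Equiv.swap_apply_of_ne_of_ne h1 h2]
  have hvala : ((Equiv.swap a b).trans π) a = π b := by simp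
  have hvalb : ((Equiv.swap a b).trans π) b = π a := by simp
  have hmem : a ∈ U' ∧ b ∈ t U' := by
    by_contra hcon
    have hπ' : Precedes π U' (t U') := by
      intro x hx y hy
      have hxy := hpre x hx y hy
      by_cases hxa : x = a <;> by_cases hxb : x = b <;> by_cases hya : y = a <;>
        by_cases hyb : y = b <;> grind
    have huniq := Finset.card_le_one.1 (card_filter_precedes_le_one h π) U
      (Finset.mem_filter.2 ⟨hU, hπ⟩) U' (Finset.mem_filter.2 ⟨hU', hπ'⟩)
    subst huniq
    have := hpre b hb a ha
    rw [hvala, hvalb] at this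
    exact lt_asymm this hlt
  refine ⟨U', hU', hmem.1, hmem.2, fun x hx hxa => ?_, fun y hy hyb => ?_⟩
  · have hxb := hpre x hx b hmem.2
    by_cases hx' : x = b
    · subst hx'; exact absurd hxb (lt_irrefl _)
    · rw [hval x hxa hx', hvalb] at hxb
      grind
  · have hay := hpre a hmem.1 y hy
    by_cases hy' : y = a
    · subst hy'; exact absurd hay (lt_irrefl _)
    · rw [hval y hy' hyb, hvala] at hay
      grind

/-- In the extremal case of Bollobás' inequality, the pairs are closed under exchanges. -/
theorem setPairs_exchange {𝒰 : Finset (Finset α)} {t : Finset α → Finset α} {n : ℕ}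
    (hUn : ∀ U ∈ 𝒰, U.card = n) (htn : ∀ U ∈ 𝒰, (t U).card = n)
    (hdisj : ∀ U ∈ 𝒰, Disjoint U (t U))
    (h : ∀ U ∈ 𝒰, ∀ U' ∈ 𝒰, Disjoint U (t U') → U = U')
    (hex : ∀ π : α ≃ Fin (Fintype.card α), ∃ U ∈ 𝒰, Precedes π U (t U))
    {U : Finset α} (hU : U ∈ 𝒰) {a b : α} (ha : a ∈ t U) (hb : b ∈ U) :
    insert a (U.erase b) ∈ 𝒰 ∧ t (insert a (U.erase b)) = insert b ((t U).erase a) := by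
  have haU : a ∉ U := fun h' => Finset.disjoint_left.1 (hdisj U hU) h' ha
  have hbT : b ∉ t U := fun h' => Finset.disjoint_left.1 (hdisj U hU) hb h'
  have hab : a ≠ b := fun e => haU (e ▸ hb)
  have hcU : (insert a (U.erase b)).card = n := by
    rw [Finset.card_insert_of_notMem (by simp [haU]), Finset.card_erase_of_mem hb, hUn U hU]
    have := hUn U hU ▸ Finset.card_pos.2 ⟨b, hb⟩
    omega
  have hcT : (insert b ((t U).erase a)).card = n := by
    rw [Finset.card_insert_of_notMem (by simp [hbT]), Finset.card_erase_of_mem ha, htn U hU]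
    have := htn U hU ▸ Finset.card_pos.2 ⟨a, ha⟩
    omega
  have hdj := fun x (hx : x ∈ U) (hx' : x ∈ t U) => Finset.disjoint_left.1 (hdisj U hU) hx hx'
  have hlast : ∃ U₁ ∈ 𝒰, b ∈ t U₁ ∧ U₁ = insert a (U.erase b) := by
    obtain ⟨π, hπ⟩ := exists_numbering_of_rank (fun x : α =>
      if x = b then 1 else if x = a then 2 else if x ∈ U then 0 else if x ∈ t U then 3 else 4)
    obtain ⟨U₁, hU₁, ha₁, hb₁, hlt, -⟩ := exists_precedes_swap (π := π) h hex hU ha hb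
      (fun x hx y hy => hπ x y (by grind)) (fun x hxa hxb => by
        by_cases hxU : x ∈ U
        · exact Or.inl ⟨hπ x b (by grind), hπ x a (by grind)⟩
        · exact Or.inr ⟨hπ a x (by grind), hπ b x (by grind)⟩)
    refine ⟨U₁, hU₁, hb₁, Finset.eq_of_subset_of_card_le (fun x hx => ?_) (by
      rw [hcU, hUn U₁ hU₁])⟩
    by_contra hx'
    have hxa : x ≠ a := by grind
    have h1 := hlt x hx hxa
    by_cases hxb : x = b
    · simp [hxb] at h1
    · exact lt_asymm h1 (hπ b x (by grind))
  have hfirst : ∃ U₂ ∈ 𝒰, a ∈ U₂ ∧ t U₂ = insert b ((t U).erase a) := by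
    obtain ⟨π, hπ⟩ := exists_numbering_of_rank (fun x : α =>
      if x = b then 2 else if x = a then 3 else if x ∈ U then 1 else if x ∈ t U then 4 else 0)
    obtain ⟨U₂, hU₂, ha₂, hb₂, -, hlt⟩ := exists_precedes_swap (π := π) h hex hU ha hb
      (fun x hx y hy => hπ x y (by grind)) (fun x hxa hxb => by
        by_cases hxT : x ∈ t U
        · exact Or.inr ⟨hπ a x (by grind), hπ b x (by grind)⟩
        · exact Or.inl ⟨hπ x b (by grind), hπ x a (by grind)⟩)
    refine ⟨U₂, hU₂, ha₂, Finset.eq_of_subset_of_card_le (fun x hx => ?_) (by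
      rw [hcT, htn U₂ hU₂])⟩
    by_contra hx'
    have hxb : x ≠ b := by grind
    have h1 := hlt x hx hxb
    by_cases hxa : x = a
    · simp [hxa] at h1
    · exact lt_asymm h1 (hπ x a (by grind))
  obtain ⟨U₁, hU₁, -, rfl⟩ := hlast
  obtain ⟨U₂, hU₂, -, ht₂⟩ := hfirst
  have heq : insert a (U.erase b) = U₂ := h _ hU₁ _ hU₂ (by
    rw [ht₂, Finset.disjoint_left]
    intro x hx hx'
    have := hdj x
    grind)
  exact ⟨hU₁, heq ▸ ht₂⟩

/-- Uniqueness in Bollobás' inequality for set pairs of equal sizes. -/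
theorem setPairs_eq_powersetCard {𝒰 : Finset (Finset α)} {t : Finset α → Finset α} {n : ℕ}
    (hUn : ∀ U ∈ 𝒰, U.card = n) (htn : ∀ U ∈ 𝒰, (t U).card = n)
    (hdisj : ∀ U ∈ 𝒰, Disjoint U (t U))
    (h : ∀ U ∈ 𝒰, ∀ U' ∈ 𝒰, Disjoint U (t U') → U = U')
    (hcard : (2 * n).choose n ≤ 𝒰.card) :
    ∃ S : Finset α, S.card = 2 * n ∧ 𝒰 = S.powersetCard n := by
  obtain ⟨hcard', hex⟩ := setPairs_extremal hUn htn hdisj h hcard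
  obtain ⟨U₀, hU₀⟩ : 𝒰.Nonempty :=
    Finset.card_pos.1 (lt_of_lt_of_le (Nat.choose_pos (by omega)) hcard)
  have hS : (U₀ ∪ t U₀).card = 2 * n := by
    rw [Finset.card_union_of_disjoint (hdisj U₀ hU₀), hUn U₀ hU₀, htn U₀ hU₀, two_mul]
  refine ⟨U₀ ∪ t U₀, hS, (Finset.eq_of_subset_of_card_le (fun V hV => ?_) (by
    rw [Finset.card_powersetCard, hS, hcard'])).symm⟩
  rw [Finset.mem_powersetCard] at hV
  suffices key : ∀ j, ∀ U ∈ 𝒰, U ∪ t U = U₀ ∪ t U₀ → (V \ U).card = j → V ∈ 𝒰 from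
    key _ U₀ hU₀ rfl rfl
  intro j
  induction j with
  | zero =>
    intro U hU _ hj
    have hVU : V ⊆ U := Finset.sdiff_eq_empty_iff_subset.1 (Finset.card_eq_zero.1 hj)
    rwa [Finset.eq_of_subset_of_card_le hVU (by rw [hV.2, hUn U hU])]
  | succ j ih =>
    intro U hU hUS hj
    obtain ⟨a, ha⟩ : (V \ U).Nonempty := Finset.card_pos.1 (by omega)
    have hcc : (U \ V).card = (V \ U).card :=
      Finset.card_sdiff_comm (by rw [hV.2, hUn U hU])
    obtain ⟨b, hb⟩ : (U \ V).Nonempty := Finset.card_pos.1 (by omega)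
    rw [Finset.mem_sdiff] at ha hb
    have haT : a ∈ t U := by
      have : a ∈ U ∪ t U := hUS ▸ hV.1 ha.1
      exact (Finset.mem_union.1 this).resolve_left ha.2
    obtain ⟨hU', ht'⟩ := setPairs_exchange hUn htn hdisj h hex hU haT hb.1
    refine ih _ hU' ?_ ?_
    · rw [ht', ← hUS]
      ext x
      simp only [Finset.mem_union, Finset.mem_insert, Finset.mem_erase]
      grind
    · have : V \ insert a (U.erase b) = (V \ U).erase a := by
        ext x
        simp only [Finset.mem_sdiff, Finset.mem_insert, Finset.mem_erase]
        grind
      rw [this, Finset.card_erase_of_mem (Finset.mem_sdiff.2 ha), hj]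
      rfl

end SetPairs


section PrecedesBounds

theorem choose_add_le {n a b : ℕ} (ha : a ≤ n) (hb : b ≤ n) :
    (a + b).choose a ≤ (2 * n).choose n :=
  calc (a + b).choose a = (a + b).choose b := Nat.choose_symm_add
    _ ≤ (n + b).choose b := Nat.choose_le_choose _ (by omega)
    _ = (n + b).choose n := Nat.choose_symm_add.symm
    _ ≤ (2 * n).choose n := Nat.choose_le_choose _ (by omega)

theorem choose_add_lt {n a b : ℕ} (ha : a ≤ n) (hb : b ≤ n) (hab : a + b < 2 * n) :
    (a + b).choose a < (2 * n).choose n := by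
  obtain ⟨n, rfl⟩ : ∃ m, n = m + 1 := ⟨n - 1, by omega⟩
  have hsucc : (2 * (n + 1)).choose (n + 1) =
      (2 * n + 1).choose n + (2 * n + 1).choose (n + 1) := by
    rw [← Nat.choose_succ_succ]
    rfl
  have hpos : 0 < (2 * n + 1).choose n := Nat.choose_pos (by omega)
  have hpos' : 0 < (2 * n + 1).choose (n + 1) := Nat.choose_pos (by omega)
  rcases Nat.lt_or_ge b (n + 1) with h | h
  · have : (a + b).choose a ≤ (2 * n + 1).choose (n + 1) :=
      calc (a + b).choose a = (a + b).choose b := Nat.choose_symm_add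
        _ ≤ (n + 1 + b).choose b := Nat.choose_le_choose _ (by omega)
        _ = (n + 1 + b).choose (n + 1) := Nat.choose_symm_add.symm
        _ ≤ (2 * n + 1).choose (n + 1) := Nat.choose_le_choose _ (by omega)
    omega
  · obtain rfl : b = n + 1 := by omega
    have : (a + (n + 1)).choose a ≤ (2 * n + 1).choose (n + 1) := by
      rw [Nat.choose_symm_add]
      exact Nat.choose_le_choose _ (by omega)
    omega

variable {α : Type*} [Fintype α] [DecidableEq α]

theorem card_numberings_le_exists {𝒰 : Finset (Finset α)} {U T : Finset α} (hU : U ∈ 𝒰)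
    (hUT : Disjoint U T) :
    Fintype.card (α ≃ Fin (Fintype.card α)) ≤ (U.card + T.card).choose U.card *
      (Finset.univ.filter fun π : α ≃ Fin (Fintype.card α) => ∃ U ∈ 𝒰, Precedes π U T).card :=
  (card_numberings_le U T hUT).trans <| Nat.mul_le_mul_left _ <| Finset.card_le_card
    fun π hπ => by
      rw [Finset.mem_filter] at hπ ⊢
      exact ⟨hπ.1, U, hU, hπ.2⟩

/-- Unless `T` has size `n` and is disjoint from a unique member of `𝒰`, also of size `n`, a
numbering has a substantially larger chance to put a member of `𝒰` before `T`. -/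
theorem card_numberings_gap {𝒰 : Finset (Finset α)} {T : Finset α} {n : ℕ} (hn : 0 < n)
    (h𝒰 : ∀ U ∈ 𝒰, U.card ≤ n) (hT : T.card ≤ n) (hex : ∃ U ∈ 𝒰, Disjoint U T)
    (hbad : T.card < n ∨ (∃ U ∈ 𝒰, Disjoint U T ∧ U.card < n) ∨
      ∃ U ∈ 𝒰, ∃ U' ∈ 𝒰, Disjoint U T ∧ Disjoint U' T ∧ U ≠ U') :
    ((2 * n + 1) * (2 * n).choose n ^ 2 + (2 * n).choose n) *
        Fintype.card (α ≃ Fin (Fintype.card α)) ≤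
      (2 * n).choose n * ((2 * n + 1) * (2 * n).choose n ^ 2) *
      (Finset.univ.filter fun π : α ≃ Fin (Fintype.card α) =>
        ∃ U ∈ 𝒰, Precedes π U T).card := by
  set C := (2 * n).choose n with hC
  have hCpos : 0 < C := Nat.choose_pos (by omega)
  set E := (Finset.univ.filter fun π : α ≃ Fin (Fintype.card α) =>
    ∃ U ∈ 𝒰, Precedes π U T) with hE
  by_cases hsmall : ∃ U ∈ 𝒰, Disjoint U T ∧ U.card + T.card < 2 * n
  · obtain ⟨U, hU, hUT, hlt⟩ := hsmall
    have h1 := card_numberings_le_exists hU hUT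
    have h2 := choose_add_lt (h𝒰 U hU) hT hlt
    rw [← hC] at h2
    obtain ⟨c, hc⟩ : ∃ c, C = c + 1 := ⟨C - 1, by omega⟩
    have h3 : Fintype.card (α ≃ Fin (Fintype.card α)) ≤ c * E.card :=
      h1.trans (Nat.mul_le_mul_right _ (by omega))
    refine (Nat.mul_le_mul_left _ h3).trans ?_
    rw [← mul_assoc]
    refine Nat.mul_le_mul_right _ ?_
    rw [hc]
    nlinarith [Nat.zero_le (n * (c + 1) ^ 2)]
  · push Not at hsmall
    have hfull : ∀ U ∈ 𝒰, Disjoint U T → U.card = n ∧ T.card = n := fun U hU hUT => by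
      have := hsmall U hU hUT
      have := h𝒰 U hU
      omega
    obtain ⟨U, hU, U', hU', hUT, hUT', hne⟩ :
        ∃ U ∈ 𝒰, ∃ U' ∈ 𝒰, Disjoint U T ∧ Disjoint U' T ∧ U ≠ U' := by
      obtain ⟨U, hU, hUT⟩ := hex
      rcases hbad with h | ⟨V, hV, hVT, hlt⟩ | h
      · have := hfull U hU hUT; omega
      · have := hfull V hV hVT; omega
      · exact h
    obtain ⟨hUc, hTc⟩ := hfull U hU hUT
    obtain ⟨hUc', -⟩ := hfull U' hU' hUT'
    obtain ⟨x, hxU, hxU'⟩ : ∃ x ∈ U, x ∉ U' := by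
      by_contra! hsub
      exact hne (Finset.eq_of_subset_of_card_le hsub (by omega))
    have hxT : x ∉ T := Finset.disjoint_left.1 hUT hxU
    obtain ⟨y, hy⟩ : T.Nonempty := Finset.card_pos.1 (by omega)
    have h1 := card_numberings_le U T hUT
    have h2 := card_numberings_le_three U' T x hUT' (by simp [hxU', hxT])
    rw [hUc, hTc, ← two_mul, ← hC] at h1
    rw [hUc', hTc, ← two_mul, ← hC] at h2
    set P₁ := Finset.univ.filter fun π : α ≃ Fin (Fintype.card α) => Precedes π U T
    set P₂ := Finset.univ.filter fun π : α ≃ Fin (Fintype.card α) =>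
      Precedes π U' T ∧ Precedes π (U' ∪ T) {x}
    have hdisj : Disjoint P₁ P₂ := by
      rw [Finset.disjoint_left]
      intro π h₁ h₂
      have h₁' := (Finset.mem_filter.1 h₁).2 x hxU y hy
      have h₂' := (Finset.mem_filter.1 h₂).2.2 y (Finset.mem_union_right _ hy) x (by simp)
      exact lt_asymm h₁' h₂'
    have hsub : P₁ ∪ P₂ ⊆ E := by
      refine Finset.union_subset (fun π hπ => ?_) fun π hπ => ?_
      · exact Finset.mem_filter.2 ⟨Finset.mem_univ _, U, hU, (Finset.mem_filter.1 hπ).2⟩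
      · exact Finset.mem_filter.2 ⟨Finset.mem_univ _, U', hU', (Finset.mem_filter.1 hπ).2.1⟩
    have hcard := Finset.card_le_card hsub
    rw [Finset.card_union_of_disjoint hdisj] at hcard
    set Ω := Fintype.card (α ≃ Fin (Fintype.card α))
    set G := (2 * n + 1) * C ^ 2 with hG
    calc (G + C) * Ω = G * Ω + C * Ω := by ring
      _ ≤ G * (C * P₁.card) + C ^ 2 * ((2 * n + 1) * (C * P₂.card)) := by
        refine Nat.add_le_add (Nat.mul_le_mul_left _ h1) (Nat.mul_le_mul ?_ h2)
        exact Nat.le_self_pow (by norm_num) C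
      _ = C * G * (P₁.card + P₂.card) := by rw [hG]; ring
      _ ≤ C * G * E.card := Nat.mul_le_mul_left _ hcard

end PrecedesBounds

section Kernels

variable {α : Type*} [DecidableEq α]

theorem exists_maximal_subset_of_empty (P : Finset α → Prop) (X : Finset α) (h : P ∅) :
    ∃ T ⊆ X, P T ∧ ∀ x ∈ X, x ∉ T → ¬ P (insert x T) := by
  classical
  obtain ⟨T, hT, hmax⟩ := Finset.exists_max_image (X.powerset.filter P) Finset.card
    ⟨∅, by simp [h]⟩
  rw [Finset.mem_filter, Finset.mem_powerset] at hT
  refine ⟨T, hT.1, hT.2, fun x hx hxT hP => ?_⟩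
  have := hmax (insert x T) (by simp [Finset.insert_subset hx hT.1, hP])
  rw [Finset.card_insert_of_notMem hxT] at this
  omega

theorem card_filter_subset_le_one {F : Finset (Finset α)} {k : ℕ} (hF : ∀ A ∈ F, A.card = k)
    {T : Finset α} (hT : k ≤ T.card) : (F.filter fun A => T ⊆ A).card ≤ 1 := by
  refine Finset.card_le_one.2 fun A hA B hB => ?_
  rw [Finset.mem_filter] at hA hB
  rw [← Finset.eq_of_subset_of_card_le hA.2 (by rw [hF A hA.1]; exact hT),
    ← Finset.eq_of_subset_of_card_le hB.2 (by rw [hF B hB.1]; exact hT)]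

/-- A large uniform family contains a set `U` of smaller size which is the common part of members
whose remaining elements avoid any prescribed set of at most `m` elements. -/
theorem exists_kernel [Fintype α] {F : Finset (Finset α)} {k m : ℕ} (hF : ∀ A ∈ F, A.card = k)
    (hcard : (m + 1) ^ k < F.card) :
    ∃ U : Finset α, U.card < k ∧
      ∀ Z : Finset α, Z.card ≤ m → ∃ B ∈ F, U ⊆ B ∧ Disjoint (B \ U) Z := by
  obtain ⟨U, -, hU, hmax⟩ := exists_maximal_subset_of_empty
    (fun U => F.card ≤ (F.filter fun A => U ⊆ A).card * (m + 1) ^ U.card) Finset.univ (by simp)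
  simp only [Finset.mem_univ, true_implies, not_le] at hmax
  have hpos : 0 < (F.filter fun A => U ⊆ A).card := by
    rcases Nat.eq_zero_or_pos (F.filter fun A => U ⊆ A).card with h | h
    · rw [h] at hU; omega
    · exact h
  have hstep : ∀ x ∉ U, (F.filter fun A => insert x U ⊆ A).card * (m + 1) ≤
      (F.filter fun A => U ⊆ A).card := fun x hx => by
    have := (hmax x hx).trans_le hU
    rw [Finset.card_insert_of_notMem hx, pow_succ', ← mul_assoc] at this
    exact (Nat.lt_of_mul_lt_mul_right this).le
  refine ⟨U, ?_, fun Z hZ => ?_⟩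
  · obtain ⟨A, hA⟩ := Finset.card_pos.1 hpos
    rw [Finset.mem_filter] at hA
    refine lt_of_le_of_ne (hF A hA.1 ▸ Finset.card_le_card hA.2) fun h => ?_
    have h1 := card_filter_subset_le_one hF h.ge
    rw [h] at hU
    have := Nat.mul_le_mul_right ((m + 1) ^ k) h1
    omega
  · by_contra! hZB
    have hsub : (F.filter fun A => U ⊆ A) ⊆
        (Z \ U).biUnion fun z => F.filter fun A => insert z U ⊆ A := fun B hB => by
      rw [Finset.mem_filter] at hB
      obtain ⟨z, hz, hzZ⟩ := Finset.not_disjoint_iff.1 (hZB B hB.1 hB.2)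
      rw [Finset.mem_sdiff] at hz
      rw [Finset.mem_biUnion]
      exact ⟨z, Finset.mem_sdiff.2 ⟨hzZ, hz.2⟩,
        Finset.mem_filter.2 ⟨hB.1, Finset.insert_subset hz.1 hB.2⟩⟩
    have h1 := (Finset.card_le_card hsub).trans Finset.card_biUnion_le
    have h2 : (∑ z ∈ Z \ U, (F.filter fun A => insert z U ⊆ A).card) * (m + 1) ≤
        (Z \ U).card * (F.filter fun A => U ⊆ A).card := by
      rw [Finset.sum_mul, ← smul_eq_mul]
      exact Finset.sum_le_card_nsmul _ _ _ fun z hz => hstep z (Finset.mem_sdiff.1 hz).2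
    have h3 : (Z \ U).card ≤ m := (Finset.card_le_card Finset.sdiff_subset).trans hZ
    nlinarith

theorem sum_card_filter_subset_le {F : Finset (Finset α)} {k : ℕ} (hF : ∀ A ∈ F, A.card = k)
    (𝒯 : Finset (Finset α)) :
    ∑ T ∈ 𝒯, (F.filter fun A => T ⊆ A).card ≤ 2 ^ k * F.card := by
  have := Finset.sum_card_bipartiteAbove_eq_sum_card_bipartiteBelow
    (s := 𝒯) (t := F) (fun T A => T ⊆ A)
  unfold Finset.bipartiteAbove Finset.bipartiteBelow at this
  rw [this, mul_comm, ← smul_eq_mul]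
  refine Finset.sum_le_card_nsmul _ _ _ fun A hA => ?_
  rw [← hF A hA, ← Finset.card_powerset]
  exact Finset.card_le_card fun T hT => Finset.mem_powerset.2 (Finset.mem_filter.1 hT).2

/-- Every edge `A` has a proper subset `τ A` such that there are few distinct sets `τ A`, and a
`k`-set meeting `A` but not `τ A` does so for few `A`. -/
theorem exists_cores {F : Finset (Finset α)} {k s D Q : ℕ} (hF : ∀ A ∈ F, A.card = k)
    (hD : F.card ≤ D * s) (hs : s ≤ F.card) (hQ : 0 < Q) (hsQ : Q ^ k < s) :
    ∃ τ : Finset α → Finset α, (∀ A ∈ F, τ A ⊆ A ∧ (τ A).card < k) ∧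
      (F.image τ).card ≤ Q ^ k * 2 ^ k * D ∧
      ∀ B : Finset α, B.card ≤ k →
        (F.filter fun A => Disjoint B (τ A) ∧ ¬ Disjoint B A).card * Q ≤
          k * 2 ^ k * D * s := by
  choose τ hτsub hτ hmax using fun A : Finset α => exists_maximal_subset_of_empty
    (fun T => s ≤ (F.filter fun A => T ⊆ A).card * Q ^ T.card) A (by simpa using hs)
  simp only [not_le] at hmax
  have hsum : ∑ T ∈ F.image τ, (F.filter fun A => T ⊆ A).card ≤ 2 ^ k * (D * s) :=
    (sum_card_filter_subset_le hF _).trans (Nat.mul_le_mul_left _ hD)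
  have hτk : ∀ A ∈ F, (τ A).card < k := fun A hA => by
    refine lt_of_le_of_ne (hF A hA ▸ Finset.card_le_card (hτsub A)) fun h => ?_
    have h1 := card_filter_subset_le_one hF h.ge
    have h2 := hτ A
    rw [h] at h2
    have := Nat.mul_le_mul_right (Q ^ k) h1
    omega
  refine ⟨τ, fun A hA => ⟨hτsub A, hτk A hA⟩, ?_, fun B hB => ?_⟩
  · have h1 : (F.image τ).card * s ≤
        ∑ T ∈ F.image τ, (F.filter fun A => T ⊆ A).card * Q ^ k := by
      rw [← smul_eq_mul]
      refine Finset.card_nsmul_le_sum _ _ _ fun T hT => ?_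
      obtain ⟨A, hA, rfl⟩ := Finset.mem_image.1 hT
      exact (hτ A).trans (Nat.mul_le_mul_left _ (Nat.pow_le_pow_right hQ (hτk A hA).le))
    rw [← Finset.sum_mul] at h1
    have h2 := h1.trans (Nat.mul_le_mul_right (Q ^ k) hsum)
    refine Nat.le_of_mul_le_mul_right (c := s) ?_ (by omega)
    calc _ ≤ _ := h2
      _ = _ := by ring
  · have hsub : (F.filter fun A => Disjoint B (τ A) ∧ ¬ Disjoint B A) ⊆
        (F.image τ).biUnion fun T => B.biUnion fun x =>
          F.filter fun A => τ A = T ∧ x ∈ A ∧ x ∉ T := fun A hA => by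
      rw [Finset.mem_filter] at hA
      obtain ⟨x, hxB, hxA⟩ := Finset.not_disjoint_iff.1 hA.2.2
      simp only [Finset.mem_biUnion, Finset.mem_filter]
      exact ⟨τ A, Finset.mem_image_of_mem _ hA.1, x, hxB, hA.1, rfl, hxA,
        Finset.disjoint_left.1 hA.2.1 hxB⟩
    have hterm : ∀ T x, (F.filter fun A => τ A = T ∧ x ∈ A ∧ x ∉ T).card * Q ≤
        (F.filter fun A => T ⊆ A).card := fun T x => by
      rcases (F.filter fun A => τ A = T ∧ x ∈ A ∧ x ∉ T).eq_empty_or_nonempty with h | ⟨A, hA⟩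
      · simp [h]
      · rw [Finset.mem_filter] at hA
        obtain ⟨hA, rfl, hxA, hxT⟩ := hA
        have h1 := (hmax A x hxA hxT).trans_le (hτ A)
        rw [Finset.card_insert_of_notMem hxT, pow_succ', ← mul_assoc] at h1
        refine le_trans (Nat.mul_le_mul_right _ (Finset.card_le_card fun A' hA' => ?_))
          (Nat.lt_of_mul_lt_mul_right h1).le
        rw [Finset.mem_filter] at hA' ⊢
        exact ⟨hA'.1, Finset.insert_subset hA'.2.2.1 (hA'.2.1 ▸ hτsub A')⟩
    calc (F.filter fun A => Disjoint B (τ A) ∧ ¬ Disjoint B A).card * Q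
        ≤ (∑ T ∈ F.image τ, ∑ x ∈ B,
            (F.filter fun A => τ A = T ∧ x ∈ A ∧ x ∉ T).card) * Q := by
          refine Nat.mul_le_mul_right _ ((Finset.card_le_card hsub).trans ?_)
          exact Finset.card_biUnion_le.trans
            (Finset.sum_le_sum fun T _ => Finset.card_biUnion_le)
      _ = ∑ T ∈ F.image τ, ∑ x ∈ B,
            (F.filter fun A => τ A = T ∧ x ∈ A ∧ x ∉ T).card * Q := by
          simp only [Finset.sum_mul]
      _ ≤ ∑ T ∈ F.image τ, k * (F.filter fun A => T ⊆ A).card := by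
          refine Finset.sum_le_sum fun T _ => ?_
          refine (Finset.sum_le_card_nsmul B _ _ fun x _ => hterm T x).trans ?_
          rw [smul_eq_mul]
          exact Nat.mul_le_mul_right _ hB
      _ = k * ∑ T ∈ F.image τ, (F.filter fun A => T ⊆ A).card := (Finset.mul_sum ..).symm
      _ ≤ k * (2 ^ k * (D * s)) := Nat.mul_le_mul_left _ hsum
      _ = k * 2 ^ k * D * s := by ring

end Kernels


section Stability

variable {α : Type*} [Fintype α] [DecidableEq α]

theorem card_le_choose_mul {F : Finset (Finset α)} {k s : ℕ} (hF : ∀ A ∈ F, A.card = k)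
    (hex : ∀ A ∈ F, ∃ B ∈ F, Disjoint A B)
    (hs : ∀ A ∈ F, (F.filter fun B => Disjoint A B).card ≤ s) :
    F.card ≤ (2 * k).choose k * s := by
  have h1 := sum_card_precedes_le F id F s hs
  have hΩ : 0 < Fintype.card (α ≃ Fin (Fintype.card α)) :=
    Fintype.card_pos_iff.2 ⟨Fintype.equivFin α⟩
  have h2 : F.card * Fintype.card (α ≃ Fin (Fintype.card α)) ≤ (2 * k).choose k *
      ∑ A ∈ F, (Finset.univ.filter fun π => ∃ U ∈ F, Precedes π U (id A)).card := by
    rw [Finset.mul_sum, ← smul_eq_mul]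
    refine Finset.card_nsmul_le_sum _ _ _ fun A hA => ?_
    obtain ⟨B, hB, hAB⟩ := hex A hA
    have := card_numberings_le_exists hB hAB.symm
    rwa [hF A hA, hF B hB, ← two_mul] at this
  refine Nat.le_of_mul_le_mul_right (c := Fintype.card (α ≃ Fin (Fintype.card α))) ?_ hΩ
  calc _ ≤ _ := h2
    _ ≤ _ := Nat.mul_le_mul_left _ h1
    _ = _ := by ring

/-- Stability in a weighted form of Bollobás' inequality. -/
theorem exists_dominant_set {ι : Type*} [DecidableEq ι] (F : Finset ι) (τ : ι → Finset α)
    (𝒰 : Finset (Finset α)) {n s δ : ℕ} (hn : 0 < n)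
    (hτ : ∀ A ∈ F, (τ A).card ≤ n) (h𝒰 : ∀ U ∈ 𝒰, U.card ≤ n)
    (hex : ∀ A ∈ F, ∃ U ∈ 𝒰, Disjoint U (τ A))
    (hW : ∀ U ∈ 𝒰, (F.filter fun A => Disjoint U (τ A)).card ≤ s + δ)
    (hF : (s + 1) * (2 * n).choose n ≤ F.card)
    (hδ : 3 * ((2 * n).choose n + (2 * n + 1) * (2 * n).choose n ^ 2) * δ ≤ s) :
    ∃ S : Finset α, S.card = 2 * n ∧
      ∀ V ∈ S.powersetCard n, 2 * s ≤ 3 * (F.filter fun A => V ⊆ τ A).card := by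
  classical
  set C := (2 * n).choose n with hC
  set G := (2 * n + 1) * C ^ 2 with hG
  have hCpos : 0 < C := Nat.choose_pos (by omega)
  let bad : ι → Prop := fun A => (τ A).card < n ∨ (∃ U ∈ 𝒰, Disjoint U (τ A) ∧ U.card < n) ∨
    ∃ U ∈ 𝒰, ∃ U' ∈ 𝒰, Disjoint U (τ A) ∧ Disjoint U' (τ A) ∧ U ≠ U'
  have hsplit : (F.filter bad).card + (F.filter fun A => ¬ bad A).card = F.card :=
    Finset.card_filter_add_card_filter_not _
  have hbad : (F.filter bad).card ≤ G * δ := by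
    have hΩ : 0 < Fintype.card (α ≃ Fin (Fintype.card α)) :=
      Fintype.card_pos_iff.2 ⟨Fintype.equivFin α⟩
    have hsum := sum_card_precedes_le F τ 𝒰 _ hW
    set Ω := Fintype.card (α ≃ Fin (Fintype.card α))
    have hlow : ∑ A ∈ F, (G + if bad A then C else 0) * Ω ≤
        ∑ A ∈ F, C * G * (Finset.univ.filter fun π => ∃ U ∈ 𝒰, Precedes π U (τ A)).card := by
      refine Finset.sum_le_sum fun A hA => ?_
      split_ifs with hb
      · exact card_numberings_gap hn h𝒰 (hτ A hA) (hex A hA) hb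
      · obtain ⟨U, hU, hUA⟩ := hex A hA
        have h1 := (card_numberings_le_exists hU hUA).trans
          (Nat.mul_le_mul_right _ (choose_add_le (h𝒰 U hU) (hτ A hA)))
        calc (G + 0) * Ω = G * Ω := by ring
          _ ≤ _ := Nat.mul_le_mul_left _ h1
          _ = _ := by ring
    rw [← Finset.sum_mul, ← Finset.mul_sum, Finset.sum_add_distrib, Finset.sum_const,
      ← Finset.sum_filter, Finset.sum_const, smul_eq_mul, smul_eq_mul] at hlow
    have h2 : F.card * G + (F.filter bad).card * C ≤ C * G * (s + δ) := by
      refine Nat.le_of_mul_le_mul_right (c := Ω) ?_ hΩ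
      calc _ ≤ _ := hlow
        _ ≤ _ := Nat.mul_le_mul_left _ hsum
        _ = _ := by ring
    refine Nat.le_of_mul_le_mul_right (c := C) ?_ hCpos
    have h3 := Nat.mul_le_mul_right G hF
    nlinarith
  choose! φ hφ𝒰 hφ using hex
  set good := F.filter fun A => ¬ bad A with hgood
  have hgoodF : ∀ A ∈ good, A ∈ F := fun A hA => (Finset.mem_filter.1 hA).1
  have hgood_card : ∀ A ∈ good, (τ A).card = n := fun A hA => by
    have h1 := (Finset.mem_filter.1 hA).2
    have h2 := hτ A (hgoodF A hA)
    have h3 : ¬ (τ A).card < n := fun h => h1 (Or.inl h)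
    omega
  have hgood_card' : ∀ A ∈ good, (φ A).card = n := fun A hA => by
    have h1 := (Finset.mem_filter.1 hA).2
    have h2 := h𝒰 _ (hφ𝒰 A (hgoodF A hA))
    have h3 : ¬ (φ A).card < n := fun h =>
      h1 (Or.inr (Or.inl ⟨_, hφ𝒰 A (hgoodF A hA), hφ A (hgoodF A hA), h⟩))
    omega
  have huniq : ∀ A ∈ good, ∀ U ∈ 𝒰, Disjoint U (τ A) → U = φ A := fun A hA U hU hUA => by
    by_contra hne
    exact (Finset.mem_filter.1 hA).2 (Or.inr (Or.inr
      ⟨U, hU, _, hφ𝒰 A (hgoodF A hA), hUA, hφ A (hgoodF A hA), hne⟩))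
  have hfiber : ∀ U ∈ good.image φ, (good.filter fun A => φ A = U).card ≤ s + δ := by
    intro U hU
    obtain ⟨A₀, hA₀, rfl⟩ := Finset.mem_image.1 hU
    refine (Finset.card_le_card fun A hA => ?_).trans (hW _ (hφ𝒰 A₀ (hgoodF A₀ hA₀)))
    rw [Finset.mem_filter] at hA ⊢
    exact ⟨hgoodF A hA.1, hA.2 ▸ hφ A (hgoodF A hA.1)⟩
  have hsub𝒰 : ∀ U ∈ good.image φ, U ∈ 𝒰 := fun U hU => by
    obtain ⟨A, hA, rfl⟩ := Finset.mem_image.1 hU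
    exact hφ𝒰 A (hgoodF A hA)
  obtain ⟨c, hc⟩ : ∃ c, C = c + 1 := ⟨C - 1, by omega⟩
  have hcard : C ≤ (good.image φ).card := by
    by_contra! hlt
    have h1 := Finset.card_le_mul_card_image good (s + δ) hfiber
    have h2 := Nat.mul_le_mul_left (s + δ) (show (good.image φ).card ≤ c by omega)
    rw [hc] at hδ hF
    nlinarith
  have : Nonempty ι := by
    obtain ⟨U, hU⟩ := Finset.card_pos.1 (hCpos.trans_le hcard)
    exact ⟨(Finset.mem_image.1 hU).choose⟩
  choose! r hr hφr using fun U (hU : U ∈ good.image φ) => Finset.mem_image.1 hU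
  obtain ⟨S, hS, himage⟩ := setPairs_eq_powersetCard (t := fun U => τ (r U)) (n := n)
    (fun U hU => hφr U hU ▸ hgood_card' _ (hr U hU))
    (fun U hU => hgood_card _ (hr U hU))
    (fun U hU => by
      have := hφ _ (hgoodF _ (hr U hU))
      rwa [hφr U hU] at this)
    (fun U hU U' hU' h => by
      rw [huniq _ (hr U' hU') U (hsub𝒰 U hU) h, hφr U' hU'])
    hcard
  refine ⟨S, hS, fun V hV => ?_⟩
  rw [Finset.mem_powersetCard] at hV
  have hVc : (S \ V).card = n := by
    rw [Finset.card_sdiff_of_subset hV.1, hS, hV.2]; omega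
  have hmem : S \ V ∈ good.image φ := by
    rw [himage, Finset.mem_powersetCard]
    exact ⟨Finset.sdiff_subset, hVc⟩
  have hle : (good.filter fun A => φ A = S \ V).card ≤ (F.filter fun A => V ⊆ τ A).card := by
    refine Finset.card_le_card fun A hA => ?_
    rw [Finset.mem_filter] at hA ⊢
    refine ⟨hgoodF A hA.1, fun v hv => ?_⟩
    by_contra hvA
    obtain ⟨b, hb⟩ : (S \ V).Nonempty := Finset.card_pos.1 (by omega)
    have hdj : Disjoint (S \ V) (τ A) := hA.2 ▸ hφ A (hgoodF A hA.1)
    have hvS : v ∉ (S \ V).erase b := by simp [hv]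
    have hmem' : insert v ((S \ V).erase b) ∈ good.image φ := by
      rw [himage, Finset.mem_powersetCard, Finset.card_insert_of_notMem hvS,
        Finset.card_erase_of_mem hb, hVc]
      refine ⟨Finset.insert_subset (hV.1 hv)
        ((Finset.erase_subset _ _).trans Finset.sdiff_subset), by omega⟩
    have heq := huniq A hA.1 _ (hsub𝒰 _ hmem') (Finset.disjoint_insert_left.2
      ⟨hvA, hdj.mono_left (Finset.erase_subset _ _)⟩)
    rw [hA.2] at heq
    have : v ∈ S \ V := heq ▸ Finset.mem_insert_self _ _
    exact (Finset.mem_sdiff.1 this).2 hv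
  have htotal : good.card ≤ (good.filter fun A => φ A = S \ V).card + c * (s + δ) := by
    rw [Finset.card_eq_sum_card_image φ good, ← Finset.add_sum_erase _ _ hmem]
    refine Nat.add_le_add_left ?_ _
    refine (Finset.sum_le_card_nsmul _ _ (s + δ) fun U hU =>
      hfiber U (Finset.mem_of_mem_erase hU)).trans ?_
    rw [Finset.card_erase_of_mem hmem, himage, Finset.card_powersetCard, hS, ← hC, hc]
    simp
  rw [hc] at hδ hF
  nlinarith

end Stability

section Extremal

variable {α : Type*} [DecidableEq α]

theorem card_filter_subset_not_disjoint_le {F : Finset (Finset α)} {n : ℕ}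
    (hF : ∀ A ∈ F, A.card = n + 1) {V A : Finset α} (hV : V.card = n) (hVA : Disjoint V A) :
    (F.filter fun B => V ⊆ B ∧ ¬ Disjoint A B).card ≤ A.card := by
  refine (Finset.card_le_card fun B hB => ?_).trans
    (Finset.card_image_le (s := A) (f := fun x => insert x V))
  rw [Finset.mem_filter] at hB
  obtain ⟨x, hxA, hxB⟩ := Finset.not_disjoint_iff.1 hB.2.2
  have hxV : x ∉ V := fun h => Finset.disjoint_left.1 hVA h hxA
  exact Finset.mem_image.2 ⟨x, hxA, Finset.eq_of_subset_of_card_le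
    (Finset.insert_subset hxB hB.2.1)
    (by rw [Finset.card_insert_of_notMem hxV, hV, hF B hB.1])⟩

theorem le_card_inter_of_dominant {F : Finset (Finset α)} {n s : ℕ} (hn : 2 ≤ n)
    (hF : ∀ A ∈ F, A.card = n + 1)
    (hs : ∀ A ∈ F, (F.filter fun B => Disjoint A B).card ≤ s) (hs' : 6 * n + 12 < s)
    {S : Finset α} (hS : S.card = 2 * n)
    (hdom : ∀ V ∈ S.powersetCard n, 2 * s ≤ 3 * (F.filter fun A => V ⊆ A).card)
    {A : Finset α} (hA : A ∈ F) : n ≤ (A ∩ S).card := by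
  by_contra! hlt
  have hdiff : n + 1 ≤ (S \ A).card := by
    have := Finset.card_sdiff_add_card_inter S A
    rw [Finset.inter_comm] at this
    omega
  obtain ⟨T, hTS, hT⟩ := Finset.exists_subset_card_eq hdiff
  obtain ⟨a, ha, b, hb, hab⟩ := Finset.one_lt_card.1 (show 1 < T.card by omega)
  have hTA : Disjoint T A := Finset.sdiff_disjoint.mono_left hTS
  have hcard : ∀ x ∈ T, (T.erase x).card = n := fun x hx => by
    rw [Finset.card_erase_of_mem hx]; omega
  have hbound : ∀ x ∈ T, 2 * s ≤ 3 *
      ((F.filter fun B => T.erase x ⊆ B ∧ Disjoint A B).card + (n + 1)) := fun x hx => by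
    have h1 := hdom (T.erase x) (Finset.mem_powersetCard.2
      ⟨(Finset.erase_subset _ _).trans (hTS.trans Finset.sdiff_subset), hcard x hx⟩)
    have h2 := card_filter_subset_not_disjoint_le hF (hcard x hx)
      (hTA.mono_left (Finset.erase_subset x T))
    have h3 := Finset.card_filter_add_card_filter_not (s := F.filter fun B => T.erase x ⊆ B)
      (fun B => Disjoint A B)
    rw [Finset.filter_filter, Finset.filter_filter] at h3
    rw [hF A hA] at h2
    omega
  have h1 := hbound a ha
  have h2 := hbound b hb
  have hinter : ((F.filter fun B => T.erase a ⊆ B ∧ Disjoint A B) ∩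
      (F.filter fun B => T.erase b ⊆ B ∧ Disjoint A B)).card ≤ 1 := by
    refine (Finset.card_le_card fun B hB => ?_).trans
      (card_filter_subset_le_one hF hT.ge)
    simp only [Finset.mem_inter, Finset.mem_filter] at hB ⊢
    refine ⟨hB.1.1, fun x hx => ?_⟩
    by_cases hxa : x = a
    · exact hB.2.2.1 (Finset.mem_erase.2 ⟨hxa ▸ hab, hx⟩)
    · exact hB.1.2.1 (Finset.mem_erase.2 ⟨hxa, hx⟩)
  have hunion : ((F.filter fun B => T.erase a ⊆ B ∧ Disjoint A B) ∪
      (F.filter fun B => T.erase b ⊆ B ∧ Disjoint A B)).card ≤ s := by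
    refine (Finset.card_le_card fun B hB => ?_).trans (hs A hA)
    simp only [Finset.mem_union, Finset.mem_filter] at hB ⊢
    tauto
  have h3 := Finset.card_union_add_card_inter (F.filter fun B => T.erase a ⊆ B ∧ Disjoint A B)
    (F.filter fun B => T.erase b ⊆ B ∧ Disjoint A B)
  omega

theorem extremal_of_dominant {F : Finset (Finset α)} {n s : ℕ} (hn : 2 ≤ n)
    (hF : ∀ A ∈ F, A.card = n + 1) (hex : ∀ A ∈ F, ∃ B ∈ F, Disjoint A B)
    (hs : ∀ A ∈ F, (F.filter fun B => Disjoint A B).card ≤ s) (hs' : 6 * n + 12 < s)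
    {S : Finset α} (hS : S.card = 2 * n)
    (hdom : ∀ V ∈ S.powersetCard n, 2 * s ≤ 3 * (F.filter fun A => V ⊆ A).card)
    (hcard : (s + 1) * (2 * n).choose n ≤ F.card) :
    (∀ A ∈ F, (A ∩ S).card = n) ∧
      ∀ V ∈ S.powersetCard n, (F.filter fun A => V ⊆ A).card = s + 1 := by
  have hge : ∀ A ∈ F, n ≤ (A ∩ S).card := fun A hA =>
    le_card_inter_of_dominant hn hF hs hs' hS hdom hA
  have hinter : ∀ A ∈ F, (A ∩ S).card = n := fun A hA => by
    obtain ⟨B, hB, hAB⟩ := hex A hA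
    have h1 := hge A hA
    have h2 := hge B hB
    have h3 : (A ∩ S ∪ B ∩ S).card ≤ S.card :=
      Finset.card_le_card (Finset.union_subset Finset.inter_subset_right
        Finset.inter_subset_right)
    rw [Finset.card_union_of_disjoint (hAB.mono Finset.inter_subset_left
      Finset.inter_subset_left)] at h3
    omega
  have hinter_eq : ∀ A ∈ F, ∀ V ∈ S.powersetCard n, V ⊆ A → A ∩ S = V := fun A hA V hV hVA => by
    rw [Finset.mem_powersetCard] at hV
    exact (Finset.eq_of_subset_of_card_le (Finset.subset_inter hVA hV.1)
      (by rw [hinter A hA, hV.2])).symm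
  have hle : ∀ V ∈ S.powersetCard n, (F.filter fun A => V ⊆ A).card ≤ s + 1 := fun V hV => by
    have hVc : S \ V ∈ S.powersetCard n := by
      rw [Finset.mem_powersetCard] at hV ⊢
      exact ⟨Finset.sdiff_subset, by rw [Finset.card_sdiff_of_subset hV.1, hS, hV.2]; omega⟩
    obtain ⟨A, hA⟩ : (F.filter fun A => S \ V ⊆ A).Nonempty :=
      Finset.card_pos.1 (by have := hdom _ hVc; omega)
    rw [Finset.mem_filter] at hA
    have hAS := hinter_eq A hA.1 _ hVc hA.2
    obtain ⟨x, hx⟩ : ∃ x, A \ S = {x} := Finset.card_eq_one.1 (by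
      have := Finset.card_sdiff_add_card_inter A S
      rw [hF A hA.1, hinter A hA.1] at this
      omega)
    have hsub : (F.filter fun B => V ⊆ B) ⊆
        insert (insert x V) (F.filter fun B => Disjoint A B) := fun B hB => by
      rw [Finset.mem_filter] at hB
      rw [Finset.mem_insert, Finset.mem_filter, or_iff_not_imp_right]
      intro hnd
      have hBS := hinter_eq B hB.1 V hV hB.2
      obtain ⟨y, hyA, hyB⟩ := Finset.not_disjoint_iff.1 fun h => hnd ⟨hB.1, h⟩
      have hyS : y ∉ S := fun hyS => by
        have h1 : y ∈ S \ V := hAS ▸ Finset.mem_inter.2 ⟨hyA, hyS⟩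
        have h2 : y ∈ V := hBS ▸ Finset.mem_inter.2 ⟨hyB, hyS⟩
        exact (Finset.mem_sdiff.1 h1).2 h2
      obtain rfl : y = x := Finset.mem_singleton.1 (hx ▸ Finset.mem_sdiff.2 ⟨hyA, hyS⟩)
      rw [Finset.mem_powersetCard] at hV
      exact (Finset.eq_of_subset_of_card_le (Finset.insert_subset hyB hB.2) (by
        rw [Finset.card_insert_of_notMem fun h => hyS (hV.1 h), hV.2, hF B hB.1])).symm
    exact (Finset.card_le_card hsub).trans
      ((Finset.card_insert_le _ _).trans (Nat.add_le_add_right (hs A hA.1) 1))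
  refine ⟨hinter, (Finset.sum_eq_sum_iff_of_le hle).1
    (le_antisymm (Finset.sum_le_sum hle) ?_)⟩
  rw [Finset.sum_const, Finset.card_powersetCard, hS, smul_eq_mul, mul_comm]
  refine hcard.trans (le_trans (Finset.card_le_card fun A hA => ?_) Finset.card_biUnion_le)
  rw [Finset.mem_biUnion]
  exact ⟨A ∩ S, Finset.mem_powersetCard.2 ⟨Finset.inter_subset_right, hinter A hA⟩,
    Finset.mem_filter.2 ⟨hA, Finset.inter_subset_left⟩⟩

end Extremal

section AlmostIntersecting

variable {α : Type*} [DecidableEq α]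

theorem exists_extremal_set [Fintype α] {F : Finset (Finset α)} {n s D e Q m : ℕ} (hn : 2 ≤ n)
    (hD : D = (2 * (n + 1)).choose (n + 1))
    (he : e = 3 * ((2 * n).choose n + (2 * n + 1) * (2 * n).choose n ^ 2))
    (hQ : Q = (n + 1) * 2 ^ (n + 1) * D * e)
    (hm : m = Q ^ (n + 1) * 2 ^ (n + 1) * D * (n + 1))
    (hF : ∀ A ∈ F, A.card = n + 1)
    (hR : ∀ A ∈ F, (m + 1) ^ (n + 1) < (F.filter fun B => Disjoint A B).card)
    (hs : ∀ A ∈ F, (F.filter fun B => Disjoint A B).card ≤ s)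
    (hsQ : Q ^ (n + 1) < s) (hsn : 6 * n + 12 < s)
    (hcard : (s + 1) * (2 * n).choose n ≤ F.card) :
    ∃ S : Finset α, S.card = 2 * n ∧ (∀ A ∈ F, (A ∩ S).card = n) ∧
      ∀ V ∈ S.powersetCard n, (F.filter fun A => V ⊆ A).card = s + 1 := by
  classical
  have hCpos : 0 < (2 * n).choose n := Nat.choose_pos (by omega)
  have hDpos : 0 < D := hD ▸ Nat.choose_pos (by omega)
  have hepos : 0 < e := by rw [he]; positivity
  have hcpos : 0 < (n + 1) * 2 ^ (n + 1) * D := by positivity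
  have hQpos : 0 < Q := hQ ▸ Nat.mul_pos hcpos hepos
  have hex : ∀ A ∈ F, ∃ B ∈ F, Disjoint A B := fun A hA => by
    obtain ⟨B, hB⟩ := Finset.card_pos.1 (Nat.zero_lt_of_lt (hR A hA))
    exact ⟨B, Finset.mem_filter.1 hB⟩
  have hFD : F.card ≤ D * s := hD ▸ card_le_choose_mul hF hex hs
  have hsF : s ≤ F.card := by nlinarith
  obtain ⟨τ, hτ, himage, hτB⟩ := exists_cores hF hFD hsF hQpos hsQ
  let 𝒰 : Finset (Finset α) := Finset.univ.filter fun U => U.card ≤ n ∧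
    ∀ Z : Finset α, Z.card ≤ m → ∃ B ∈ F, U ⊆ B ∧ Disjoint (B \ U) Z
  have hZ : ((F.image τ).biUnion id).card ≤ m := by
    refine (Finset.card_biUnion_le_card_mul _ _ (n + 1) fun T hT => ?_).trans
      (hm ▸ Nat.mul_le_mul_right _ himage)
    obtain ⟨A, hA, rfl⟩ := Finset.mem_image.1 hT
    exact (hτ A hA).2.le
  obtain ⟨S, hS, hdom⟩ := exists_dominant_set F τ 𝒰 (n := n) (s := s) (δ := s / e) (by omega)
    (fun A hA => Nat.lt_succ_iff.1 (hτ A hA).2)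
    (fun U hU => (Finset.mem_filter.1 hU).2.1)
    (fun A hA => by
      obtain ⟨U, hU, hUZ⟩ := exists_kernel
        (fun B hB => hF B (Finset.mem_filter.1 hB).1) (hR A hA)
      obtain ⟨B, hB, hUB, -⟩ := hUZ ∅ (by simp)
      refine ⟨U, Finset.mem_filter.2 ⟨Finset.mem_univ _, Nat.lt_succ_iff.1 hU, fun Z hZ => ?_⟩,
        (Finset.mem_filter.1 hB).2.symm.mono hUB (hτ A hA).1⟩
      obtain ⟨B, hB, h⟩ := hUZ Z hZ
      exact ⟨B, (Finset.mem_filter.1 hB).1, h⟩)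
    (fun U hU => by
      obtain ⟨B, hB, hUB, hBZ⟩ := (Finset.mem_filter.1 hU).2.2 _ hZ
      have hbad : (F.filter fun A => Disjoint B (τ A) ∧ ¬ Disjoint B A).card ≤ s / e := by
        rw [Nat.le_div_iff_mul_le hepos]
        have := hτB B (hF B hB).le
        rw [hQ] at this
        refine Nat.le_of_mul_le_mul_left (c := (n + 1) * 2 ^ (n + 1) * D) ?_ hcpos
        calc _ = _ := by ring
          _ ≤ _ := this
      refine le_trans (Finset.card_le_card fun A hA => ?_)
        ((Finset.card_union_le _ _).trans (Nat.add_le_add (hs B hB) hbad))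
      rw [Finset.mem_filter] at hA
      have hBA : Disjoint B (τ A) := by
        rw [← Finset.sdiff_union_of_subset hUB, Finset.disjoint_union_left]
        exact ⟨hBZ.mono_right (Finset.subset_biUnion_of_mem id
          (Finset.mem_image_of_mem τ hA.1)), hA.2⟩
      simp only [Finset.mem_union, Finset.mem_filter]
      tauto)
    hcard (by rw [← he]; exact Nat.mul_div_le s e)
  refine ⟨S, hS, extremal_of_dominant hn hF hex hs hsn hS (fun V hV => ?_) hcard⟩
  refine (hdom V hV).trans (Nat.mul_le_mul_left _ (Finset.card_le_card fun A hA => ?_))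
  rw [Finset.mem_filter] at hA ⊢
  exact ⟨hA.1, hA.2.trans (hτ A hA.1).1⟩

theorem exists_eq_map_subtype {F : Finset (Finset α)} {X : Finset α} (hX : ∀ A ∈ F, A ⊆ X) :
    ∃ F' : Finset (Finset ↥X),
      F = F'.map (Finset.mapEmbedding (Function.Embedding.subtype _)).toEmbedding := by
  refine ⟨F.image fun A => A.subtype (· ∈ X), ?_⟩
  have key : ∀ A ∈ F, (A.subtype (· ∈ X)).map (Function.Embedding.subtype _) = A :=
    fun A hA => Finset.subtype_map_of_mem (hX A hA)
  ext A
  simp only [Finset.mem_map, Finset.mem_image, exists_exists_and_eq_and,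
    RelEmbedding.coe_toEmbedding, Finset.mapEmbedding_apply]
  exact ⟨fun hA => ⟨A, hA, key A hA⟩, fun ⟨B, hB, h⟩ => h ▸ (key B hB).symm ▸ hB⟩

end AlmostIntersecting

/-- For every `k > 2` there exist constants `R = R(k)` and `s0 = s0(k)`
such that for every `s > s0`: if `F` is a `k`-uniform `[R,s]`-almost intersecting hypergraph
with at least `(s+1) * (2k-2 choose k-1)` edges, then there is a set `S` of `2k-2` vertices
such that every edge of `F` meets `S` in exactly `k-1` elements, and every `(k-1)`-subset of
`S` lies in exactly `s+1` edges of `F`. -/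
theorem stmt_8 (k : ℕ) (hk : 2 < k) :
    ∃ R s0 : ℕ, ∀ s : ℕ, s0 < s →
      ∀ (α : Type u) [DecidableEq α] (F : Finset (Finset α)),
        (∀ A ∈ F, A.card = k) →
        (∀ A ∈ F, R ≤ (F.filter fun B => Disjoint A B).card ∧
          (F.filter fun B => Disjoint A B).card ≤ s) →
        (s + 1) * Nat.choose (2 * k - 2) (k - 1) ≤ F.card →
        ∃ S : Finset α, S.card = 2 * k - 2 ∧
          (∀ e ∈ F, (e ∩ S).card = k - 1) ∧
          (∀ T ∈ S.powersetCard (k - 1), (F.filter fun e => T ⊆ e).card = s + 1) := by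
  obtain ⟨n, rfl⟩ : ∃ n, k = n + 1 := ⟨k - 1, by omega⟩
  obtain ⟨D, hD⟩ : ∃ D, D = (2 * (n + 1)).choose (n + 1) := ⟨_, rfl⟩
  obtain ⟨e, he⟩ : ∃ e, e = 3 * ((2 * n).choose n + (2 * n + 1) * (2 * n).choose n ^ 2) :=
    ⟨_, rfl⟩
  obtain ⟨Q, hQ⟩ : ∃ Q, Q = (n + 1) * 2 ^ (n + 1) * D * e := ⟨_, rfl⟩
  obtain ⟨m, hm⟩ : ∃ m, m = Q ^ (n + 1) * 2 ^ (n + 1) * D * (n + 1) := ⟨_, rfl⟩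
  refine ⟨(m + 1) ^ (n + 1) + 1, Q ^ (n + 1) + (6 * n + 12), fun s hs α _ F hF hRs hcard => ?_⟩
  rw [show 2 * (n + 1) - 2 = 2 * n by omega, Nat.add_sub_cancel] at *
  obtain ⟨F', hF'⟩ := exists_eq_map_subtype (F := F) (X := F.biUnion id) fun A hA => Finset.subset_biUnion_of_mem id hA
  generalize F.biUnion id = X at F' hF'
  subst hF'
  simp only [Finset.mem_map, forall_exists_index, and_imp, forall_apply_eq_imp_iff₂,
    RelEmbedding.coe_toEmbedding, Finset.mapEmbedding_apply, Finset.card_map,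
    Finset.filter_map, Function.comp_def, Finset.disjoint_map] at hF hRs hcard ⊢
  obtain ⟨S, hS, hinter, hdeg⟩ := exists_extremal_set (s := s) (by omega) hD he hQ hm hF
    (fun A hA => (hRs A hA).1) (fun A hA => (hRs A hA).2) (by omega) (by omega) hcard
  refine ⟨S.map (Function.Embedding.subtype _), by rw [Finset.card_map, hS],
    fun A hA => ?_, fun T hT => ?_⟩
  · rw [← Finset.map_inter, Finset.card_map, hinter A hA]
  · rw [Finset.powersetCard_map, Finset.mem_map] at hT
    obtain ⟨V, hV, rfl⟩ := hT
    simpa using hdeg V hV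
end

section
/- For every integer s > 13, any [1,s]-almost intersecting graph has at most 2s+2 edges. -/
open Finset

section CrossingRelation

variable {α : Type*} {r : α → α → Prop}

/-- For any two disjoint edges `ab` and `cd`, if the crossing pair `ac` is not an edge, then the
other three crossing pairs are edges and every edge meets `{a, b, c, d}`. -/
def MissingCross (r : α → α → Prop) : Prop :=
  ∀ a b c d, r a b → r c d → a ≠ c → a ≠ d → b ≠ c → b ≠ d → ¬ r a c →
    r a d ∧ r b c ∧ r b d ∧ ∀ x y, r x y →
      x = a ∨ x = b ∨ x = c ∨ x = d ∨ y = a ∨ y = b ∨ y = c ∨ y = d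

/-- The vertices `a, b, c, d` are pairwise adjacent. -/
structure IsK4 (r : α → α → Prop) (a b c d : α) : Prop where
  ab : r a b
  ac : r a c
  ad : r a d
  bc : r b c
  bd : r b d
  cd : r c d

/-- If `ab` and `cd` are disjoint edges with `ac` missing, then any edge disjoint from `bd` contains
`a` or `c`, and its other endpoint completes a `K4`. -/
lemma MissingCross.exists_isK4_of_not_adj (hP : MissingCross r) (hsymm : ∀ x y, r x y → r y x)
    (hdisj : ∀ a b, r a b → ∃ c d, r c d ∧ a ≠ c ∧ a ≠ d ∧ b ≠ c ∧ b ≠ d)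
    {a b c d : α} (hab : r a b) (hcd : r c d) (hac' : a ≠ c) (had' : a ≠ d) (hbc' : b ≠ c)
    (hbd' : b ≠ d) (hac : ¬ r a c) : ∃ a b c d, IsK4 r a b c d := by
  obtain ⟨had, hbc, hbd, hout⟩ := hP a b c d hab hcd hac' had' hbc' hbd' hac
  have key : ∀ u v w, r u v → (u = a ∧ w = c ∨ u = c ∧ w = a) → v ≠ b → v ≠ d →
      ∃ a b c d, IsK4 r a b c d := by
    intro u v w huv hu hvb hvd
    have hvu := hsymm _ _ huv
    have hub : r u b := by grind
    have hud : r u d := by grind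
    have hwb : r w b := by grind
    have hwd : r w d := by grind
    have huw : ¬ r u w := by grind
    have hvb' := (hP u v w b huv hwb (by grind) (by grind) (by grind) (by grind) huw).2.2.1
    have hvd' := (hP u v w d huv hwd (by grind) (by grind) (by grind) (by grind) huw).2.2.1
    exact ⟨u, v, b, d, huv, hub, hud, hvb', hvd', hbd⟩
  obtain ⟨p, q, hpq, h1, h2, h3, h4⟩ := hdisj b d hbd
  rcases hout p q hpq with h | h | h | h | h | h | h | h
  · exact key p q c hpq (by grind) h2.symm h4.symm
  · exact absurd h.symm h1
  · exact key p q a hpq (by grind) h2.symm h4.symm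
  · exact absurd h.symm h3
  · exact key q p c (hsymm _ _ hpq) (by grind) h1.symm h3.symm
  · exact absurd h.symm h2
  · exact key q p a (hsymm _ _ hpq) (by grind) h1.symm h3.symm
  · exact absurd h.symm h4

lemma MissingCross.exists_isK4 (hP : MissingCross r) (hsymm : ∀ x y, r x y → r y x)
    (hdisj : ∀ a b, r a b → ∃ c d, r c d ∧ a ≠ c ∧ a ≠ d ∧ b ≠ c ∧ b ≠ d)
    {a b : α} (hab : r a b) : ∃ a b c d, IsK4 r a b c d := by
  obtain ⟨c, d, hcd, h1, h2, h3, h4⟩ := hdisj a b hab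
  by_contra hno
  have key : ∀ a b c d, r a b → r c d → a ≠ c → a ≠ d → b ≠ c → b ≠ d → r a c :=
    fun a b c d hab hcd h1 h2 h3 h4 ↦ by_contra fun hac ↦
      hno (hP.exists_isK4_of_not_adj hsymm hdisj hab hcd h1 h2 h3 h4 hac)
  have hba := hsymm _ _ hab
  have hdc := hsymm _ _ hcd
  exact hno ⟨a, b, c, d, hab, key a b c d hab hcd h1 h2 h3 h4, key a b d c hab hdc h2 h1 h4 h3,
    key b a c d hba hcd h3 h4 h1 h2, key b a d c hba hdc h4 h3 h2 h1, hcd⟩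

lemma MissingCross.adj_or_adj (hP : MissingCross r) {a b c d x u : α}
    (hK : IsK4 r a b c d) (hx : x ∉ [a, b, c, d])
    (hxu : r x u) : (r x a ∨ r x b) ∧ (r x c ∨ r x d) := by
  obtain ⟨hab, hac, had, hbc, hbd, hcd⟩ := hK
  simp only [List.mem_cons, List.not_mem_nil, or_false, not_or] at hx
  obtain ⟨hxa, hxb, hxc, hxd⟩ := hx
  have key : ∀ p q, r p q → x ≠ p → x ≠ q → u ≠ p → u ≠ q → r x p ∨ r x q := by
    intro p q hpq h1 h2 h3 h4
    by_contra! h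
    exact h.2 (hP x u p q hxu hpq h1 h2 h3 h4 h.1).1
  constructor
  · by_cases hua : u = a
    · exact Or.inl (hua ▸ hxu)
    by_cases hub : u = b
    · exact Or.inr (hub ▸ hxu)
    exact key a b hab hxa hxb hua hub
  · by_cases huc : u = c
    · exact Or.inl (huc ▸ hxu)
    by_cases hud : u = d
    · exact Or.inr (hud ▸ hxu)
    exact key c d hcd hxc hxd huc hud

/-- Non-isolated vertices outside a `K4` are pairwise adjacent. -/
lemma MissingCross.adj_of_notMem_isK4 (hP : MissingCross r) (hirr : ∀ x, ¬ r x x)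
    {a b c d x y u v : α} (hK : IsK4 r a b c d)
    (hx : x ∉ [a, b, c, d]) (hy : y ∉ [a, b, c, d]) (hxy : x ≠ y) (hxu : r x u) (hyv : r y v) :
    r x y := by
  have hx' := (hP.adj_or_adj hK hx hxu).1
  have hy' := (hP.adj_or_adj hK hy hyv).2
  obtain ⟨hab, hac, had, hbc, hbd, hcd⟩ := hK
  by_contra hn
  have key : ∀ p q p' q', r x p → r y q → r p q → r p' q' → x ≠ q → y ≠ p →
      p' ∉ [x, p, y, q] → q' ∉ [x, p, y, q] → False := by
    intro p q p' q' h1 h2 h3 h4 h5 h6 h7 h8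
    have := (hP x p y q h1 h2 hxy h5 h6.symm (by grind) hn).2.2.2 p' q' h4
    grind
  have hne : ∀ p q, r p q → p ≠ q := fun p q h hpq ↦ hirr q (hpq ▸ h)
  have hab' := hne _ _ hab
  have hac' := hne _ _ hac
  have had' := hne _ _ had
  have hbc' := hne _ _ hbc
  have hbd' := hne _ _ hbd
  have hcd' := hne _ _ hcd
  simp only [List.mem_cons, List.not_mem_nil, or_false, not_or] at hx hy key
  clear hP hirr hne hxu hyv
  rcases hx' with h | h <;> rcases hy' with h' | h'
  · exact key a c b d h h' hac hbd (by clear key; grind) (by clear key; grind)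
      (by clear key; grind) (by clear key; grind)
  · exact key a d b c h h' had hbc (by clear key; grind) (by clear key; grind)
      (by clear key; grind) (by clear key; grind)
  · exact key b c a d h h' hbc had (by clear key; grind) (by clear key; grind)
      (by clear key; grind) (by clear key; grind)
  · exact key b d a c h h' hbd hac (by clear key; grind) (by clear key; grind)
      (by clear key; grind) (by clear key; grind)

end CrossingRelation

section EdgeCounting

variable {α : Type*} [DecidableEq α]

/-- By inclusion-exclusion, if `A` and `B` are each disjoint from at most `s` of more than `2s + 2`
edges, then the edges meeting both outnumber those meeting neither by at least three. -/
lemma three_add_card_disjoint_both_le {s : ℕ} {F : Finset (Finset α)} (hF : 2 * s + 2 < #F)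
    {A B : Finset α} (hA : #{C ∈ F | Disjoint A C} ≤ s) (hB : #{C ∈ F | Disjoint B C} ≤ s) :
    3 + #{C ∈ F | Disjoint A C ∧ Disjoint B C} ≤ #{C ∈ F | ¬ Disjoint A C ∧ ¬ Disjoint B C} := by
  have h1 := card_union_add_card_inter {C ∈ F | Disjoint A C} {C ∈ F | Disjoint B C}
  rw [← filter_or, ← filter_and] at h1
  have h2 := card_filter_add_card_filter_not (s := F) (fun C ↦ Disjoint A C ∨ Disjoint B C)
  simp only [not_or] at h2
  omega

lemma filter_meets_both_subset {F : Finset (Finset α)} (hF : ∀ A ∈ F, #A = 2) {a b c d : α}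
    (hac : a ≠ c) (had : a ≠ d) (hbc : b ≠ c) (hbd : b ≠ d) :
    {C ∈ F | ¬ Disjoint {a, b} C ∧ ¬ Disjoint {c, d} C} ⊆
      ({{a, c}, {a, d}, {b, c}, {b, d}} : Finset (Finset α)).filter (· ∈ F) := by
  intro C hC
  simp only [mem_filter, disjoint_insert_left, disjoint_singleton_left, not_and_or, not_not] at hC
  obtain ⟨hCF, h1, h2⟩ := hC
  have key : ∀ p q, p ≠ q → p ∈ C → q ∈ C → C = {p, q} := fun p q hpq hp hq ↦
    (eq_of_subset_of_card_le (insert_subset hp (singleton_subset_iff.2 hq))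
      (by rw [hF C hCF, card_pair hpq])).symm
  simp only [mem_filter, hCF, mem_insert, mem_singleton, and_true]
  rcases h1 with h1 | h1 <;> rcases h2 with h2 | h2
  · exact Or.inl (key _ _ hac h1 h2)
  · exact Or.inr (Or.inl (key _ _ had h1 h2))
  · exact Or.inr (Or.inr (Or.inl (key _ _ hbc h1 h2)))
  · exact Or.inr (Or.inr (Or.inr (key _ _ hbd h1 h2)))

lemma three_add_card_le_card_cross {s : ℕ} {F : Finset (Finset α)} (hF : 2 * s + 2 < #F)
    (huniform : ∀ A ∈ F, #A = 2) (hle : ∀ A ∈ F, #{B ∈ F | Disjoint A B} ≤ s) {a b c d : α}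
    (hab : {a, b} ∈ F) (hcd : {c, d} ∈ F) (hac : a ≠ c) (had : a ≠ d) (hbc : b ≠ c)
    (hbd : b ≠ d) :
    3 + #{C ∈ F | Disjoint {a, b} C ∧ Disjoint {c, d} C} ≤
      #{C ∈ ({{a, c}, {a, d}, {b, c}, {b, d}} : Finset (Finset α)) | C ∈ F} :=
  (three_add_card_disjoint_both_le hF (hle _ hab) (hle _ hcd)).trans
    (card_le_card (filter_meets_both_subset huniform hac had hbc hbd))

lemma missingCross_of_card_disjoint_le {s : ℕ} {F : Finset (Finset α)} (hF : 2 * s + 2 < #F)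
    (huniform : ∀ A ∈ F, #A = 2) (hle : ∀ A ∈ F, #{B ∈ F | Disjoint A B} ≤ s) :
    MissingCross fun x y : α ↦ ({x, y} : Finset α) ∈ F := by
  intro a b c d hab hcd hac had hbc hbd hn
  have h := three_add_card_le_card_cross hF huniform hle hab hcd hac had hbc hbd
  have h3 : #({{a, d}, {b, c}, {b, d}} : Finset (Finset α)) ≤ 3 := card_le_three
  have hsub : {C ∈ ({{a, c}, {a, d}, {b, c}, {b, d}} : Finset (Finset α)) | C ∈ F} ⊆
      {{a, d}, {b, c}, {b, d}} := by
    intro C hC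
    grind
  have heq := eq_of_subset_of_card_le hsub (by omega)
  have hmem : ∀ C ∈ ({{a, d}, {b, c}, {b, d}} : Finset (Finset α)), C ∈ F := fun C hC ↦
    (mem_filter.1 (heq ▸ hC)).2
  refine ⟨hmem _ (by simp), hmem _ (by simp), hmem _ (by simp), fun x y hxy ↦ ?_⟩
  have h0 : #{C ∈ F | Disjoint {a, b} C ∧ Disjoint {c, d} C} = 0 := by
    rw [heq] at h
    omega
  rw [card_eq_zero, filter_eq_empty_iff] at h0
  have := h0 hxy
  simp only [disjoint_insert_left, disjoint_singleton_left, mem_insert, mem_singleton] at this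
  grind

lemma eq_of_disjoint_both {s : ℕ} {F : Finset (Finset α)} (hF : 2 * s + 2 < #F)
    (huniform : ∀ A ∈ F, #A = 2) (hle : ∀ A ∈ F, #{B ∈ F | Disjoint A B} ≤ s) {a b c d : α}
    (hab : {a, b} ∈ F) (hcd : {c, d} ∈ F) (hac : a ≠ c) (had : a ≠ d) (hbc : b ≠ c)
    (hbd : b ≠ d) {C D : Finset α} (hC : C ∈ F) (hD : D ∈ F) (haC : Disjoint {a, b} C)
    (hcC : Disjoint {c, d} C) (haD : Disjoint {a, b} D) (hcD : Disjoint {c, d} D) : C = D := by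
  have h := three_add_card_le_card_cross hF huniform hle hab hcd hac had hbc hbd
  have h4 := (card_filter_le ({{a, c}, {a, d}, {b, c}, {b, d}} : Finset (Finset α)) (· ∈ F)).trans
    card_le_four
  exact card_le_one.1 (show #{C ∈ F | Disjoint {a, b} C ∧ Disjoint {c, d} C} ≤ 1 by omega)
    C (mem_filter.2 ⟨hC, haC, hcC⟩) D (mem_filter.2 ⟨hD, haD, hcD⟩)

end EdgeCounting

/-- For every `s > 13`, any `[1,s]`-almost intersecting graph has at most
`2s+2` edges. -/
theorem stmt_9 {α : Type*} [DecidableEq α] (s : ℕ) (hs : 13 < s)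
    (F : Finset (Finset α))
    (huniform : ∀ A ∈ F, A.card = 2)
    (hai : ∀ A ∈ F, 1 ≤ (F.filter fun B => Disjoint A B).card ∧
      (F.filter fun B => Disjoint A B).card ≤ s) :
    F.card ≤ 2 * s + 2 := by
  by_contra! hF
  have hle : ∀ A ∈ F, #{B ∈ F | Disjoint A B} ≤ s := fun A hA ↦ (hai A hA).2
  have hP := missingCross_of_card_disjoint_le hF huniform hle
  have hsymm : ∀ x y : α, ({x, y} : Finset α) ∈ F → ({y, x} : Finset α) ∈ F :=
    fun x y h ↦ pair_comm x y ▸ h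
  have hirr : ∀ x : α, ({x, x} : Finset α) ∉ F := fun x h ↦ by simpa using huniform _ h
  have hdisj : ∀ a b : α, ({a, b} : Finset α) ∈ F →
      ∃ c d, ({c, d} : Finset α) ∈ F ∧ a ≠ c ∧ a ≠ d ∧ b ≠ c ∧ b ≠ d := by
    intro a b hab
    obtain ⟨C, hC⟩ := card_pos.1 (hai _ hab).1
    obtain ⟨hC, hd⟩ := mem_filter.1 hC
    obtain ⟨c, d, -, rfl⟩ := card_eq_two.1 (huniform C hC)
    simp only [disjoint_insert_left, disjoint_singleton_left, mem_insert, mem_singleton] at hd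
    grind
  obtain ⟨A, hA⟩ := card_pos.1 (show 0 < #F by omega)
  obtain ⟨a₀, b₀, -, rfl⟩ := card_eq_two.1 (huniform A hA)
  obtain ⟨a, b, c, d, hK⟩ := hP.exists_isK4 hsymm hdisj hA
  set T : Finset α := F.biUnion id \ {a, b, c, d} with hT
  have hmem : ∀ x ∈ T, x ∉ [a, b, c, d] ∧ ∃ u, ({x, u} : Finset α) ∈ F := by
    intro x hx
    simp only [hT, mem_sdiff, mem_biUnion, id] at hx
    obtain ⟨⟨C, hC, hxC⟩, hx⟩ := hx
    obtain ⟨u, v, -, rfl⟩ := card_eq_two.1 (huniform C hC)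
    refine ⟨by simpa using hx, ?_⟩
    rcases mem_insert.1 hxC with rfl | hxv
    · exact ⟨v, hC⟩
    · obtain rfl := mem_singleton.1 hxv
      exact ⟨u, hsymm _ _ hC⟩
  have hadj : ∀ x ∈ T, ∀ y ∈ T, x ≠ y → ({x, y} : Finset α) ∈ F := fun x hx y hy hxy ↦
    let ⟨hx, u, hu⟩ := hmem x hx
    let ⟨hy, v, hv⟩ := hmem y hy
    hP.adj_of_notMem_isK4 hirr hK hx hy hxy hu hv
  have hT2 : #T ≤ 2 := by
    by_contra! h
    obtain ⟨x, hx, y, hy, z, hz, hxy, hxz, hyz⟩ := two_lt_card.1 h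
    have hne : ∀ p q, ({p, q} : Finset α) ∈ F → p ≠ q := fun p q h hpq ↦ hirr q (hpq ▸ h)
    have hx' := (hmem x hx).1
    have hy' := (hmem y hy).1
    have hz' := (hmem z hz).1
    have := eq_of_disjoint_both hF huniform hle hK.ab hK.cd (hne _ _ hK.ac) (hne _ _ hK.ad)
      (hne _ _ hK.bc) (hne _ _ hK.bd) (hadj x hx y hy hxy) (hadj x hx z hz hxz)
      (by simp; grind) (by simp; grind) (by simp; grind) (by simp; grind)
    have hy'' : y ∈ ({x, z} : Finset α) := this ▸ mem_insert_of_mem (mem_singleton_self y)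
    grind
  have hU : #(F.biUnion id) ≤ 6 := by
    have h1 := card_le_card_sdiff_add_card (s := F.biUnion id) (t := {a, b, c, d})
    rw [← hT] at h1
    have h2 : #({a, b, c, d} : Finset α) ≤ 4 := card_le_four
    omega
  have hsub : F ⊆ (F.biUnion id).powersetCard 2 := fun C hC ↦
    mem_powersetCard.2 ⟨subset_biUnion_of_mem id hC, huniform C hC⟩
  have h15 := card_le_card hsub
  rw [card_powersetCard] at h15
  have := Nat.choose_le_choose 2 hU
  have : Nat.choose 6 2 = 15 := rfl
  omega
end

section
/- For every integer s > 13, any [0,s]-almost intersecting graph that is not a star has at most 2s+3 edges. -/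
open Finset

section AlmostIntersecting

variable {α : Type*} [DecidableEq α] {F : Finset (Finset α)}

/-- The number of members of `F` containing `v`. -/
def edgeDegree (F : Finset (Finset α)) (v : α) : ℕ := #{e ∈ F | v ∈ e}

theorem card_filter_mem_le_of_exists_ne_mem (hF : ∀ e ∈ F, #e = 2) (z : α) (S : Finset α)
    (p : Finset α → Prop) [DecidablePred p]
    (h : ∀ e ∈ F, z ∈ e → p e → ∃ b ∈ S, b ∈ e ∧ b ≠ z) :
    #{e ∈ F | z ∈ e ∧ p e} ≤ #S := by
  refine (card_le_card (t := S.image fun b => {z, b}) fun e he => ?_).trans card_image_le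
  obtain ⟨heF, hz, hp⟩ := mem_filter.1 he
  obtain ⟨b, hbS, hbe, hbz⟩ := h e heF hz hp
  refine mem_image.2 ⟨b, hbS, eq_of_subset_of_card_le ?_ ?_⟩
  · simp [insert_subset_iff, hz, hbe]
  · rw [hF e heF, card_pair hbz.symm]

theorem card_add_one_le_card_disjoint_add_edgeDegree {u v : α} (he : {u, v} ∈ F) :
    #F + 1 ≤ #{B ∈ F | Disjoint {u, v} B} + (edgeDegree F u + edgeDegree F v) := by
  have hsub : F ⊆ {B ∈ F | Disjoint {u, v} B} ∪ ({e ∈ F | u ∈ e} ∪ {e ∈ F | v ∈ e}) := by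
    intro B hB
    simp only [mem_union, mem_filter, hB, true_and, disjoint_insert_left, disjoint_singleton_left]
    tauto
  have h1 := (card_le_card hsub).trans (card_union_le _ _)
  have h2 := card_union_add_card_inter {e ∈ F | u ∈ e} {e ∈ F | v ∈ e}
  have h3 : 0 < #({e ∈ F | u ∈ e} ∩ {e ∈ F | v ∈ e}) := card_pos.2 ⟨{u, v}, by simp [he]⟩
  unfold edgeDegree
  omega

theorem sum_edgeDegree_eq_sum_card_inter (F : Finset (Finset α)) (B : Finset α) :
    ∑ v ∈ B, edgeDegree F v = ∑ e ∈ F, #(B ∩ e) := by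
  simp only [edgeDegree, card_filter, ← filter_mem_eq_inter]
  exact sum_comm

theorem sum_edgeDegree_le_two_mul (hF : ∀ e ∈ F, #e = 2) (B : Finset α) :
    ∑ v ∈ B, edgeDegree F v ≤ 2 * #F := by
  rw [sum_edgeDegree_eq_sum_card_inter, mul_comm, ← smul_eq_mul]
  exact sum_le_card_nsmul _ _ _ fun e he => (card_le_card inter_subset_right).trans (hF e he).le

theorem sum_edgeDegree_le_add_choose (hF : ∀ e ∈ F, #e = 2) (B : Finset α) :
    ∑ v ∈ B, edgeDegree F v ≤ #F + (#B).choose 2 := by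
  have hinner : #{e ∈ F | e ⊆ B} ≤ (#B).choose 2 := by
    rw [← card_powersetCard]
    refine card_le_card fun e he => ?_
    rw [mem_filter] at he
    exact mem_powersetCard.2 ⟨he.2, hF e he.1⟩
  have hle : ∑ e ∈ F, #(B ∩ e) ≤ ∑ e ∈ F, (1 + if e ⊆ B then 1 else 0) := by
    refine sum_le_sum fun e he => ?_
    have h2 := hF e he
    split_ifs with h
    · exact (card_le_card inter_subset_right).trans h2.le
    · have : #(B ∩ e) < #e := card_lt_card
        ⟨inter_subset_right, fun hs => h (hs.trans inter_subset_left)⟩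
      omega
  rw [sum_add_distrib, ← card_filter, sum_const, smul_eq_mul, mul_one] at hle
  rw [sum_edgeDegree_eq_sum_card_inter]
  omega

/-- If the two degrees along every edge sum to at least `#F / 2 + 3`, then the graph is small
or a star. -/
theorem exists_forall_mem_of_le_edgeDegree_add (hF : ∀ e ∈ F, #e = 2) (hcard : 14 < #F)
    (hdeg : ∀ u v, {u, v} ∈ F → #F + 6 ≤ 2 * (edgeDegree F u + edgeDegree F v)) :
    ∃ v : α, ∀ e ∈ F, v ∈ e := by
  set B := {v ∈ F.biUnion id | #F + 6 ≤ 4 * edgeDegree F v} with hB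
  have hBdeg : ∀ v ∈ B, #F + 6 ≤ 4 * edgeDegree F v := fun v hv => (mem_filter.1 hv).2
  have hcover : ∀ e ∈ F, ∃ b ∈ B, b ∈ e := by
    intro e he
    obtain ⟨u, v, -, rfl⟩ := card_eq_two.1 (hF e he)
    have h := hdeg u v he
    rcases le_total (edgeDegree F u) (edgeDegree F v) with h' | h'
    · exact ⟨v, mem_filter.2 ⟨mem_biUnion.2 ⟨_, he, by simp⟩, by omega⟩, by simp⟩
    · exact ⟨u, mem_filter.2 ⟨mem_biUnion.2 ⟨_, he, by simp⟩, by omega⟩, by simp⟩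
  have hsmall : ∀ z ∉ B, edgeDegree F z ≤ #B := by
    intro z hz
    have := card_filter_mem_le_of_exists_ne_mem hF z B (fun _ => True) fun e he _ _ => by
      obtain ⟨b, hb, hbe⟩ := hcover e he
      exact ⟨b, hb, hbe, fun h => hz (h ▸ hb)⟩
    simpa [edgeDegree] using this
  have hlarge : ∀ x ∈ B, #B ≤ edgeDegree F x → #F + 6 ≤ 2 * (edgeDegree F x + #B) := by
    intro x hx hxd
    have hin : #{e ∈ F | x ∈ e ∧ e ⊆ B} ≤ #(B.erase x) := by
      refine card_filter_mem_le_of_exists_ne_mem hF x _ _ fun e he hxe heB => ?_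
      obtain ⟨b, hb, hbx⟩ := exists_mem_ne (by rw [hF e he]; norm_num) x
      exact ⟨b, mem_erase.2 ⟨hbx, heB hb⟩, hb, hbx⟩
    have hlt : #(B.erase x) < #B := card_erase_lt_of_mem hx
    obtain ⟨e, he, hxe, heB⟩ : ∃ e ∈ F, x ∈ e ∧ ¬ e ⊆ B := by
      by_contra! hall
      have : ({e ∈ F | x ∈ e ∧ e ⊆ B} : Finset (Finset α)) = {e ∈ F | x ∈ e} :=
        filter_congr fun e he => and_iff_left_of_imp (hall e he)
      rw [this] at hin
      unfold edgeDegree at hxd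
      omega
    obtain ⟨z, hze, hzB⟩ := not_subset.1 heB
    have hxz : x ≠ z := fun h => hzB (h ▸ hx)
    have hpair : {x, z} = e := eq_of_subset_of_card_le
      (by simp [insert_subset_iff, hxe, hze]) (by rw [hF e he, card_pair hxz])
    have h1 := hdeg x z (hpair ▸ he)
    have h2 := hsmall z hzB
    omega
  have hsum := card_nsmul_le_sum B (fun v => 4 * edgeDegree F v) (#F + 6) hBdeg
  rw [← mul_sum, smul_eq_mul] at hsum
  have htwo := sum_edgeDegree_le_two_mul hF B
  have hchoose := sum_edgeDegree_le_add_choose hF B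
  have hlt8 : #B < 8 := by
    by_contra! h
    have := Nat.mul_le_mul_right (#F + 6) h
    omega
  have hle4 : #B ≤ 4 := by
    by_contra! h
    generalize #B = k at *
    interval_cases k <;> simp [Nat.choose] at hchoose <;> omega
  have hsum' : #B * (#F + 6) ≤ ∑ v ∈ B, 2 * (edgeDegree F v + #B) := by
    rw [← smul_eq_mul]
    refine card_nsmul_le_sum B _ _ fun x hx => hlarge x hx ?_
    have := hBdeg x hx
    omega
  rw [← mul_sum, sum_add_distrib, sum_const, smul_eq_mul] at hsum'
  have hle1 : #B ≤ 1 := by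
    by_contra! h
    generalize #B = k at *
    interval_cases k <;> simp [Nat.choose] at hchoose <;> omega
  obtain ⟨e₀, he₀⟩ : F.Nonempty := card_pos.1 (by omega)
  obtain ⟨b₀, hb₀, -⟩ := hcover e₀ he₀
  refine ⟨b₀, fun e he => ?_⟩
  obtain ⟨b, hb, hbe⟩ := hcover e he
  rwa [card_le_one.1 hle1 b₀ hb₀ b hb]

end AlmostIntersecting

/-- For every `s > 13`, any `[0,s]`-almost intersecting graph that is not
a star has at most `2s+3` edges. -/
theorem stmt_12 {α : Type*} [DecidableEq α] (s : ℕ) (hs : 13 < s)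
    (F : Finset (Finset α))
    (huniform : ∀ A ∈ F, A.card = 2)
    (hai : ∀ A ∈ F, (F.filter fun B => Disjoint A B).card ≤ s)
    (hstar : ¬ ∃ v : α, ∀ e ∈ F, v ∈ e) :
    F.card ≤ 2 * s + 3 := by
  by_contra! hlt
  refine hstar (exists_forall_mem_of_le_edgeDegree_add huniform (by omega) fun u v he => ?_)
  have h1 := hai _ he
  have h2 := card_add_one_le_card_disjoint_add_edgeDegree he
  omega
end

section
/- Let s > 625 and let F be a 3-uniform [0,s]-almost intersecting hypergraph such that for every edge e ∈ F and every two vertices x, y ∈ e, there is an edge of F disjoint from {x,y}. Then F has at most 6s+10 edges. -/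
namespace AlmostIntersecting

open Finset

variable {α : Type*} [DecidableEq α]

/-- The number of edges of `F` containing `x`. -/
def deg (F : Finset (Finset α)) (x : α) : ℕ := (F.filter fun e => x ∈ e).card

/-- The number of edges of `F` containing both `x` and `y`. -/
def codeg (F : Finset (Finset α)) (x y : α) : ℕ := (F.filter fun e => x ∈ e ∧ y ∈ e).card

lemma eq_triple {e : Finset α} (he : e.card = 3) {x y z : α} (hx : x ∈ e) (hy : y ∈ e)
    (hz : z ∈ e) (hxy : x ≠ y) (hxz : x ≠ z) (hyz : y ≠ z) : e = {x, y, z} := by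
  symm
  apply eq_of_subset_of_card_le
  · intro t ht
    simp only [mem_insert, mem_singleton] at ht
    rcases ht with rfl | rfl | rfl <;> assumption
  · rw [he, card_eq_three.2 ⟨x, y, z, hxy, hxz, hyz, rfl⟩]

/-- At most `|T|` edges contain a given pair disjoint from `T` and meet `T`. -/
lemma card_pair_meeting_le {F : Finset (Finset α)} (hu : ∀ A ∈ F, A.card = 3) {x y : α}
    (hxy : x ≠ y) {T : Finset α} (hx : x ∉ T) (hy : y ∉ T) :
    (F.filter fun e => (x ∈ e ∧ y ∈ e) ∧ ¬ Disjoint T e).card ≤ T.card := by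
  refine le_trans (card_le_card ?_) (card_image_le (s := T) (f := fun z => ({x, y, z} : Finset α)))
  intro e he
  simp only [mem_filter, not_disjoint_iff] at he
  obtain ⟨heF, ⟨hxe, hye⟩, z, hzT, hze⟩ := he
  refine mem_image.2 ⟨z, hzT, (eq_triple (hu e heF) hxe hye hze hxy ?_ ?_).symm⟩
  · rintro rfl; exact hx hzT
  · rintro rfl; exact hy hzT

section Bounds

variable {s : ℕ} {F : Finset (Finset α)}

/-- A subfamily has at most `s` members disjoint from a given edge. -/
lemma card_filter_le (hai : ∀ A ∈ F, (F.filter fun B => Disjoint A B).card ≤ s)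
    (p : Finset α → Prop) [DecidablePred p] {A : Finset α} (hA : A ∈ F) :
    (F.filter p).card ≤ s + (F.filter fun e => p e ∧ ¬ Disjoint A e).card := by
  have h1 := card_filter_add_card_filter_not (s := F.filter p) (fun e => Disjoint A e)
  rw [filter_filter, filter_filter] at h1
  have h2 : (F.filter fun e => p e ∧ Disjoint A e).card ≤ s :=
    le_trans (card_le_card fun e he => by
      simp only [mem_filter] at he ⊢; exact ⟨he.1, he.2.2⟩) (hai A hA)
  omega

lemma codeg_le (hu : ∀ A ∈ F, A.card = 3)
    (hai : ∀ A ∈ F, (F.filter fun B => Disjoint A B).card ≤ s)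
    (hpair : ∀ e ∈ F, ∀ x ∈ e, ∀ y ∈ e, x ≠ y → ∃ g ∈ F, x ∉ g ∧ y ∉ g)
    {x y : α} (hxy : x ≠ y) : codeg F x y ≤ s + 3 := by
  unfold codeg
  rcases (F.filter fun e => x ∈ e ∧ y ∈ e).eq_empty_or_nonempty with h | ⟨e, he⟩
  · rw [h]; simp
  · simp only [mem_filter] at he
    obtain ⟨g, hg, hxg, hyg⟩ := hpair e he.1 x he.2.1 y he.2.2 hxy
    have h1 := card_filter_le hai (fun e => x ∈ e ∧ y ∈ e) hg
    have h2 := card_pair_meeting_le hu hxy hxg hyg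
    have h3 := hu g hg
    omega

lemma deg_le_sum_codeg (hai : ∀ A ∈ F, (F.filter fun B => Disjoint A B).card ≤ s)
    {x : α} {B : Finset α} (hB : B ∈ F) : deg F x ≤ s + ∑ b ∈ B, codeg F x b := by
  refine (card_filter_le hai (fun e => x ∈ e) hB).trans (Nat.add_le_add_left ?_ s)
  refine le_trans (card_le_card ?_)
    (card_biUnion_le (s := B) (t := fun b => F.filter fun e => x ∈ e ∧ b ∈ e))
  intro e he
  simp only [mem_filter, not_disjoint_iff, mem_biUnion] at he ⊢
  obtain ⟨heF, hx, b, hb, hbe⟩ := he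
  exact ⟨b, hb, heF, hx, hbe⟩

lemma card_le_sum_deg (hai : ∀ A ∈ F, (F.filter fun B => Disjoint A B).card ≤ s)
    {B : Finset α} (hB : B ∈ F) : F.card ≤ s + ∑ b ∈ B, deg F b := by
  have h := card_filter_le hai (fun _ => True) hB
  rw [filter_true_of_mem (fun _ _ => trivial)] at h
  refine h.trans (Nat.add_le_add_left ?_ s)
  refine le_trans (card_le_card ?_)
    (card_biUnion_le (s := B) (t := fun b => F.filter fun e => b ∈ e))
  intro e he
  simp only [mem_filter, not_disjoint_iff, mem_biUnion, true_and] at he ⊢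
  obtain ⟨heF, b, hb, hbe⟩ := he
  exact ⟨b, hb, heF, hbe⟩

/-- Double counting of disjoint pairs of edges, one containing `x, y` and the other avoiding
both. -/
lemma card_avoiding_mul_le (hu : ∀ A ∈ F, A.card = 3)
    (hai : ∀ A ∈ F, (F.filter fun B => Disjoint A B).card ≤ s)
    {x y : α} (hxy : x ≠ y) :
    (F.filter fun B => x ∉ B ∧ y ∉ B).card * (codeg F x y - 3) ≤ codeg F x y * s := by
  refine card_mul_le_card_mul (s := F.filter fun B => x ∉ B ∧ y ∉ B)
    (t := F.filter fun e => x ∈ e ∧ y ∈ e) (fun B e => Disjoint B e) ?_ ?_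
  · intro B hB
    simp only [mem_filter] at hB
    have h1 := card_filter_add_card_filter_not (s := F.filter fun e => x ∈ e ∧ y ∈ e)
      (fun e => Disjoint B e)
    have h2 := card_pair_meeting_le hu hxy hB.2.1 hB.2.2
    rw [← filter_filter, hu B hB.1] at h2
    unfold codeg bipartiteAbove
    beta_reduce
    omega
  · intro e he
    simp only [mem_filter] at he
    refine le_trans (card_le_card ?_) (hai e he.1)
    intro B hB
    simp only [bipartiteBelow, mem_filter] at hB ⊢
    exact ⟨hB.1.1, hB.2.symm⟩

lemma card_add_codeg_le (x y : α) :
    F.card + codeg F x y ≤ deg F x + deg F y + (F.filter fun B => x ∉ B ∧ y ∉ B).card := by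
  have h1 := card_filter_add_card_filter_not (s := F) (fun e => x ∈ e ∨ y ∈ e)
  have h2 := card_union_add_card_inter (F.filter fun e => x ∈ e) (F.filter fun e => y ∈ e)
  rw [← filter_or, ← filter_and] at h2
  simp only [not_or] at h1
  unfold codeg deg
  omega

/-- Every edge through `x` is counted at most once by the codegrees of `x` with vertices of `N`,
except for the edges `{x, b, c}` with `b, c ∈ N`. -/
lemma sum_codeg_le (hu : ∀ A ∈ F, A.card = 3) {x : α} {N : Finset α} (hx : x ∉ N) :
    ∑ b ∈ N, codeg F x b ≤ deg F x + N.card.choose 2 := by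
  have h1 : ∑ b ∈ N, codeg F x b = ∑ e ∈ F.filter (fun e => x ∈ e), (N ∩ e).card := by
    unfold codeg
    have := sum_card_bipartiteAbove_eq_sum_card_bipartiteBelow (s := N)
      (t := F.filter fun e => x ∈ e) (fun b e => b ∈ e)
    simp only [bipartiteAbove, bipartiteBelow, filter_filter, filter_mem_eq_inter] at this
    exact this
  have h2 : ∀ e ∈ F.filter (fun e => x ∈ e),
      (N ∩ e).card ≤ 1 + if e.erase x ⊆ N then 1 else 0 := by
    intro e he
    simp only [mem_filter] at he
    have hc : (e.erase x).card = 2 := by rw [card_erase_of_mem he.2, hu e he.1]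
    have hsub : N ∩ e ⊆ e.erase x := fun t ht => by
      rw [mem_inter] at ht
      exact mem_erase.2 ⟨fun h => hx (h ▸ ht.1), ht.2⟩
    split_ifs with h
    · exact (card_le_card hsub).trans hc.le
    · by_contra! hlt
      have : N ∩ e = e.erase x := eq_of_subset_of_card_le hsub (by omega)
      exact h (this ▸ inter_subset_left)
  have h3 : ((F.filter fun e => x ∈ e).filter fun e => e.erase x ⊆ N).card ≤
      N.card.choose 2 := by
    rw [← card_powersetCard]
    refine card_le_card_of_injOn (fun e => e.erase x) ?_ ?_
    · intro e he
      simp only [coe_filter, mem_filter, Set.mem_ofPred_eq] at he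
      simp only [mem_coe, mem_powersetCard]
      exact ⟨he.2, by rw [card_erase_of_mem he.1.2, hu e he.1.1]⟩
    · intro e he f hf hef
      simp only [coe_filter, mem_filter, Set.mem_ofPred_eq] at he hf
      dsimp only at hef
      rw [← insert_erase he.1.2, ← insert_erase hf.1.2, hef]
  calc ∑ b ∈ N, codeg F x b
      ≤ ∑ e ∈ F.filter (fun e => x ∈ e), (1 + if e.erase x ⊆ N then 1 else 0) :=
        h1 ▸ sum_le_sum h2
    _ ≤ deg F x + N.card.choose 2 := by
        rw [sum_add_distrib, ← card_filter]
        simp only [sum_const, smul_eq_mul, mul_one]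
        exact Nat.add_le_add_left h3 _

/-- If many edges contain `x` and one of `b`, `c`, then every edge avoiding `x` meets
`{b, c}`. -/
lemma mem_or_mem_of_codeg (hu : ∀ A ∈ F, A.card = 3)
    (hai : ∀ A ∈ F, (F.filter fun B => Disjoint A B).card ≤ s)
    {x b c : α} (hxb : x ≠ b) (hxc : x ≠ c) (hbc : b ≠ c)
    (hw : s + 8 ≤ codeg F x b + codeg F x c) {B : Finset α} (hB : B ∈ F) (hxB : x ∉ B) :
    b ∈ B ∨ c ∈ B := by
  by_contra! h
  have h1 := card_pair_meeting_le hu hxb hxB h.1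
  have h2 := card_pair_meeting_le hu hxc hxB h.2
  rw [hu B hB] at h1 h2
  have h3 := card_union_add_card_inter (F.filter fun e => x ∈ e ∧ b ∈ e)
    (F.filter fun e => x ∈ e ∧ c ∈ e)
  rw [← filter_or, ← filter_and] at h3
  have h4 : (F.filter fun e => (x ∈ e ∧ b ∈ e) ∧ x ∈ e ∧ c ∈ e).card ≤ 1 := by
    rw [card_le_one]
    intro e he f hf
    simp only [mem_filter] at he hf
    rw [eq_triple (hu e he.1) he.2.1.1 he.2.1.2 he.2.2.2 hxb hxc hbc,
      eq_triple (hu f hf.1) hf.2.1.1 hf.2.1.2 hf.2.2.2 hxb hxc hbc]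
  have h5 := card_filter_le hai (fun e => (x ∈ e ∧ b ∈ e) ∨ (x ∈ e ∧ c ∈ e)) hB
  have h6 : (F.filter fun e => ((x ∈ e ∧ b ∈ e) ∨ (x ∈ e ∧ c ∈ e)) ∧ ¬ Disjoint B e).card ≤
      3 + 3 := by
    simp only [or_and_right]
    rw [filter_or]
    exact (card_union_le _ _).trans (Nat.add_le_add h1 h2)
  unfold codeg at hw
  omega

lemma card_opposite_pairs_le (hs : 1 ≤ s) (hu : ∀ A ∈ F, A.card = 3)
    (hai : ∀ A ∈ F, (F.filter fun B => Disjoint A B).card ≤ s)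
    (hcod : ∀ x y : α, x ≠ y → codeg F x y ≤ s + 3)
    {a b c d : α} (hab : a ≠ b) (hcd : c ≠ d) :
    (F.filter fun e => (a ∈ e ∧ b ∈ e) ∧ c ∉ e ∧ d ∉ e).card +
      (F.filter fun e => (c ∈ e ∧ d ∈ e) ∧ a ∉ e ∧ b ∉ e).card ≤ 2 * s + 2 := by
  have bound : ∀ {a b c d : α}, a ≠ b → c ≠ d →
      (F.filter fun e => (a ∈ e ∧ b ∈ e) ∧ c ∉ e ∧ d ∉ e).Nonempty →
      (F.filter fun e => (c ∈ e ∧ d ∈ e) ∧ a ∉ e ∧ b ∉ e).card ≤ s + 1 := by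
    rintro a b c d hab hcd ⟨e, he⟩
    simp only [mem_filter] at he
    obtain ⟨heF, ⟨hae, hbe⟩, hce, hde⟩ := he
    have h1 := card_filter_le hai (fun e => (c ∈ e ∧ d ∈ e) ∧ a ∉ e ∧ b ∉ e) heF
    have h2 := card_pair_meeting_le (T := (e.erase a).erase b) hu hcd
      (by simp [hce]) (by simp [hde])
    have h3 : ((e.erase a).erase b).card = 1 := by
      rw [card_erase_of_mem (mem_erase.2 ⟨hab.symm, hbe⟩), card_erase_of_mem hae, hu e heF]
    have h4 : (F.filter fun f => ((c ∈ f ∧ d ∈ f) ∧ a ∉ f ∧ b ∉ f) ∧ ¬ Disjoint e f).card ≤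
        (F.filter fun f => (c ∈ f ∧ d ∈ f) ∧ ¬ Disjoint ((e.erase a).erase b) f).card := by
      apply card_le_card
      intro f hf
      simp only [mem_filter, not_disjoint_iff] at hf ⊢
      obtain ⟨hfF, ⟨hcdf, haf, hbf⟩, z, hze, hzf⟩ := hf
      refine ⟨hfF, hcdf, z, ?_, hzf⟩
      simp only [mem_erase]
      exact ⟨fun h => hbf (h ▸ hzf), fun h => haf (h ▸ hzf), hze⟩
    omega
  have trivial_bound : ∀ {a b c d : α}, a ≠ b →
      (F.filter fun e => (a ∈ e ∧ b ∈ e) ∧ c ∉ e ∧ d ∉ e).card ≤ s + 3 := by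
    intro a b c d hab
    refine le_trans (card_le_card fun e he => ?_) (hcod a b hab)
    simp only [mem_filter] at he ⊢
    exact ⟨he.1, he.2.1⟩
  rcases (F.filter fun e => (a ∈ e ∧ b ∈ e) ∧ c ∉ e ∧ d ∉ e).eq_empty_or_nonempty with h | h
  · have := trivial_bound (c := a) (d := b) hcd
    rw [h, card_empty]
    omega
  rcases (F.filter fun e => (c ∈ e ∧ d ∈ e) ∧ a ∉ e ∧ b ∉ e).eq_empty_or_nonempty with h' | h'
  · have := trivial_bound (c := c) (d := d) hab
    rw [h', card_empty]
    omega
  have h1 := bound hab hcd h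
  have h2 := bound hcd hab h'
  omega

/-- If every edge has at least two vertices in a fixed 4-set, then `|F| ≤ 6s + 10`. -/
lemma card_le_of_two_of_four (hs : 1 ≤ s) (hu : ∀ A ∈ F, A.card = 3)
    (hai : ∀ A ∈ F, (F.filter fun B => Disjoint A B).card ≤ s)
    (hcod : ∀ x y : α, x ≠ y → codeg F x y ≤ s + 3)
    {a b c d : α} (hab : a ≠ b) (hac : a ≠ c) (had : a ≠ d) (hbc : b ≠ c) (hbd : b ≠ d)
    (hcd : c ≠ d)
    (htwo : ∀ e ∈ F, (a ∈ e ∧ b ∈ e) ∨ (a ∈ e ∧ c ∈ e) ∨ (a ∈ e ∧ d ∈ e) ∨ (b ∈ e ∧ c ∈ e) ∨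
      (b ∈ e ∧ d ∈ e) ∨ (c ∈ e ∧ d ∈ e)) :
    F.card ≤ 6 * s + 10 := by
  have h1 := card_opposite_pairs_le hs hu hai hcod hab hcd
  have h2 := card_opposite_pairs_le hs hu hai hcod hac hbd
  have h3 := card_opposite_pairs_le hs hu hai hcod had hbc
  set T : Finset (Finset α) := {{a, b, c}, {a, b, d}, {a, c, d}, {b, c, d}} with hT
  have hTc : T.card ≤ 4 := card_le_four
  have hcover : F ⊆ T ∪
      (((F.filter fun e => (a ∈ e ∧ b ∈ e) ∧ c ∉ e ∧ d ∉ e) ∪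
        (F.filter fun e => (c ∈ e ∧ d ∈ e) ∧ a ∉ e ∧ b ∉ e)) ∪
      (((F.filter fun e => (a ∈ e ∧ c ∈ e) ∧ b ∉ e ∧ d ∉ e) ∪
        (F.filter fun e => (b ∈ e ∧ d ∈ e) ∧ a ∉ e ∧ c ∉ e)) ∪
      ((F.filter fun e => (a ∈ e ∧ d ∈ e) ∧ b ∉ e ∧ c ∉ e) ∪
        (F.filter fun e => (b ∈ e ∧ c ∈ e) ∧ a ∉ e ∧ d ∉ e)))) := by
    intro e he
    have k1 := fun ha hb hc => eq_triple (hu e he) (x := a) (y := b) (z := c) ha hb hc hab hac hbc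
    have k2 := fun ha hb hc => eq_triple (hu e he) (x := a) (y := b) (z := d) ha hb hc hab had hbd
    have k3 := fun ha hb hc => eq_triple (hu e he) (x := a) (y := c) (z := d) ha hb hc hac had hcd
    have k4 := fun ha hb hc => eq_triple (hu e he) (x := b) (y := c) (z := d) ha hb hc hbc hbd hcd
    have k5 := htwo e he
    simp only [hT, mem_union, mem_filter, mem_insert, mem_singleton]
    clear h1 h2 h3 hcod hai hu htwo hs hTc
    by_cases ha : a ∈ e <;> by_cases hb : b ∈ e <;> by_cases hc : c ∈ e <;>
      by_cases hd : d ∈ e <;> simp_all only [and_true, and_false, or_false, or_true,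
        true_or, not_true_eq_false, not_false_eq_true, forall_const]
  have h4 := card_le_card hcover
  have u1 := card_union_le T
      (((F.filter fun e => (a ∈ e ∧ b ∈ e) ∧ c ∉ e ∧ d ∉ e) ∪
        (F.filter fun e => (c ∈ e ∧ d ∈ e) ∧ a ∉ e ∧ b ∉ e)) ∪
      (((F.filter fun e => (a ∈ e ∧ c ∈ e) ∧ b ∉ e ∧ d ∉ e) ∪
        (F.filter fun e => (b ∈ e ∧ d ∈ e) ∧ a ∉ e ∧ c ∉ e)) ∪
      ((F.filter fun e => (a ∈ e ∧ d ∈ e) ∧ b ∉ e ∧ c ∉ e) ∪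
        (F.filter fun e => (b ∈ e ∧ c ∈ e) ∧ a ∉ e ∧ d ∉ e))))
  have u2 := card_union_le
      ((F.filter fun e => (a ∈ e ∧ b ∈ e) ∧ c ∉ e ∧ d ∉ e) ∪
        (F.filter fun e => (c ∈ e ∧ d ∈ e) ∧ a ∉ e ∧ b ∉ e))
      (((F.filter fun e => (a ∈ e ∧ c ∈ e) ∧ b ∉ e ∧ d ∉ e) ∪
        (F.filter fun e => (b ∈ e ∧ d ∈ e) ∧ a ∉ e ∧ c ∉ e)) ∪
      ((F.filter fun e => (a ∈ e ∧ d ∈ e) ∧ b ∉ e ∧ c ∉ e) ∪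
        (F.filter fun e => (b ∈ e ∧ c ∈ e) ∧ a ∉ e ∧ d ∉ e)))
  have u3 := card_union_le
      ((F.filter fun e => (a ∈ e ∧ c ∈ e) ∧ b ∉ e ∧ d ∉ e) ∪
        (F.filter fun e => (b ∈ e ∧ d ∈ e) ∧ a ∉ e ∧ c ∉ e))
      ((F.filter fun e => (a ∈ e ∧ d ∈ e) ∧ b ∉ e ∧ c ∉ e) ∪
        (F.filter fun e => (b ∈ e ∧ c ∈ e) ∧ a ∉ e ∧ d ∉ e))
  have v1 := (card_union_le _ _).trans h1
  have v2 := (card_union_le _ _).trans h2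
  have v3 := (card_union_le _ _).trans h3
  omega

lemma deg_le (hu : ∀ A ∈ F, A.card = 3)
    (hai : ∀ A ∈ F, (F.filter fun B => Disjoint A B).card ≤ s)
    (hcod : ∀ x y : α, x ≠ y → codeg F x y ≤ s + 3)
    {x : α} {B : Finset α} (hB : B ∈ F) (hx : x ∉ B) : deg F x ≤ 4 * s + 9 := by
  have h1 := deg_le_sum_codeg hai (x := x) hB
  have h2 := sum_le_card_nsmul B (fun b => codeg F x b) (s + 3) fun b hb =>
    hcod x b fun h => hx (h ▸ hb)
  rw [hu B hB, smul_eq_mul] at h2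
  omega

/-- The maximum degree of a large family is at least roughly `14s/5`. -/
lemma le_deg_of_max (hs : 625 < s) (hu : ∀ A ∈ F, A.card = 3)
    (hai : ∀ A ∈ F, (F.filter fun B => Disjoint A B).card ≤ s)
    (hF : 6 * s + 11 ≤ F.card) {x : α} (hmax : ∀ y, deg F y ≤ deg F x)
    {B : Finset α} (hB : B ∈ F) (hx : x ∉ B) : 14 * s ≤ 5 * deg F x + 6 := by
  have h1 := card_le_sum_deg hai hB
  have h2 := sum_le_card_nsmul B (fun b => deg F b) (deg F x) fun b _ => hmax b
  rw [hu B hB, smul_eq_mul] at h2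
  have h3 := deg_le_sum_codeg hai (x := x) hB
  obtain ⟨y, hy, h4⟩ : ∃ y ∈ B, deg F x ≤ s + 3 * codeg F x y := by
    by_contra! h
    have hne : B.Nonempty := card_pos.1 (by rw [hu B hB]; omega)
    have h5 := sum_lt_sum_of_nonempty hne (f := fun b => s + 3 * codeg F x b) h
    rw [sum_add_distrib, ← mul_sum, sum_const, sum_const, hu B hB, smul_eq_mul, smul_eq_mul] at h5
    omega
  have hxy : x ≠ y := fun h => hx (h ▸ hy)
  have h5 := card_avoiding_mul_le hu hai hxy
  have h6 := card_add_codeg_le (F := F) x y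
  have h7 := hmax y
  by_contra! hlt
  obtain ⟨w, hw⟩ : ∃ w, codeg F x y = w + 3 := ⟨codeg F x y - 3, by omega⟩
  rw [hw] at h5 h6 h4
  have h8 : s + 14 ≤ (F.filter fun B => x ∉ B ∧ y ∉ B).card := by omega
  have h9 := Nat.mul_le_mul_right w h8
  rw [Nat.add_sub_cancel] at h5
  have h10 := h9.trans h5
  ring_nf at h10
  omega

/-- In a large family, a vertex of maximum degree has large codegree with three vertices. -/
lemma exists_three_heavy (hs : 625 < s) (hu : ∀ A ∈ F, A.card = 3)
    (hai : ∀ A ∈ F, (F.filter fun B => Disjoint A B).card ≤ s)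
    (hcod : ∀ x y : α, x ≠ y → codeg F x y ≤ s + 3)
    (hF : 6 * s + 11 ≤ F.card) {x : α} (hlarge : 14 * s ≤ 5 * deg F x + 6)
    (hdeg : deg F x ≤ 4 * s + 9) :
    ∃ a b c, (x ≠ a ∧ s + 8 ≤ 2 * codeg F x a) ∧ (x ≠ b ∧ s + 8 ≤ 2 * codeg F x b) ∧
      (x ≠ c ∧ s + 8 ≤ 2 * codeg F x c) ∧ a ≠ b ∧ a ≠ c ∧ b ≠ c := by
  set K := (F.biUnion id).filter fun b => x ≠ b ∧ s + 8 ≤ 2 * codeg F x b with hK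
  set N := (F.biUnion id).filter fun b => x ≠ b ∧ 2 * deg F x ≤ 2 * codeg F x b + 5 * s + 13
    with hN
  by_cases hKc : 2 < K.card
  · obtain ⟨a, b, c, ha, hb, hc, hab, hac, hbc⟩ := two_lt_card_iff.1 hKc
    simp only [hK, mem_filter] at ha hb hc
    exact ⟨a, b, c, ha.2, hb.2, hc.2, hab, hac, hbc⟩
  exfalso
  have hNc : N.card ≤ 12 := by
    by_contra! h
    obtain ⟨M, hM, hMc⟩ := exists_subset_card_eq (s := N) (n := 13) h
    have hMx : x ∉ M := fun h => by
      have := hM h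
      simp [hN] at this
    have h1 := sum_codeg_le hu hMx
    have h2 := card_nsmul_le_sum M (fun b => 2 * codeg F x b + 5 * s + 13) (2 * deg F x)
      fun b hb => by
        have := hM hb
        simp only [hN, mem_filter] at this
        exact this.2.2
    rw [sum_add_distrib, sum_add_distrib, ← mul_sum, sum_const, sum_const, hMc] at h2
    rw [hMc, show Nat.choose 13 2 = 78 from rfl] at h1
    simp only [smul_eq_mul] at h2
    omega
  have hG := card_filter_add_card_filter_not (s := F) (fun e => x ∈ e)
  have hG' := card_filter_add_card_filter_not (s := F.filter fun e => x ∉ e)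
    (fun e => 2 ≤ (e ∩ K).card)
  have hheavy : ((F.filter fun e => x ∉ e).filter fun e => 2 ≤ (e ∩ K).card).card ≤ s + 3 := by
    rcases Finset.eq_empty_or_nonempty
      ((F.filter fun e => x ∉ e).filter fun e => 2 ≤ (e ∩ K).card) with h | ⟨e, he⟩
    · rw [h]; simp
    have hinter : ∀ e : Finset α, 2 ≤ (e ∩ K).card → K ⊆ e := fun e h => by
      have := eq_of_subset_of_card_le (inter_subset_right : e ∩ K ⊆ K) (by omega)
      exact this ▸ inter_subset_left
    have hK2 : K.card = 2 := by
      have h1 := card_le_card (inter_subset_right : e ∩ K ⊆ K)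
      have h2 := (mem_filter.1 he).2
      omega
    obtain ⟨a, b, hab, hKab⟩ := card_eq_two.1 hK2
    refine le_trans (card_le_card fun f hf => ?_) (hcod a b hab)
    simp only [mem_filter] at hf ⊢
    have := hinter f hf.2
    exact ⟨hf.1.1, this (by simp [hKab]), this (by simp [hKab])⟩
  have hlight : ((F.filter fun e => x ∉ e).filter fun e => ¬ 2 ≤ (e ∩ K).card).card ≤ 220 := by
    have hsub : ((F.filter fun e => x ∉ e).filter fun e => ¬ 2 ≤ (e ∩ K).card) ⊆
        powersetCard 3 N := by
      intro B hB
      simp only [mem_filter] at hB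
      obtain ⟨⟨hBF, hxB⟩, hBK⟩ := hB
      rw [mem_powersetCard]
      refine ⟨fun y hy => ?_, hu B hBF⟩
      have hV : ∀ z ∈ B, z ∈ F.biUnion id := fun z hz => mem_biUnion.2 ⟨B, hBF, hz⟩
      have hxne : ∀ z ∈ B, x ≠ z := fun z hz h => hxB (h ▸ hz)
      rw [hN, mem_filter]
      refine ⟨hV y hy, hxne y hy, ?_⟩
      have h1 := deg_le_sum_codeg hai (x := x) hBF
      rw [← add_sum_erase B _ hy] at h1
      obtain ⟨u, v, huv, hBe⟩ := card_eq_two.1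
        (show (B.erase y).card = 2 by rw [card_erase_of_mem hy, hu B hBF])
      have huB : u ∈ B := mem_of_mem_erase (hBe ▸ mem_insert_self u {v})
      have hvB : v ∈ B := mem_of_mem_erase (hBe ▸ mem_insert_of_mem (mem_singleton_self v))
      rw [hBe, sum_pair huv] at h1
      have hu3 := hcod x u (hxne u huB)
      have hv3 := hcod x v (hxne v hvB)
      have hnot : ¬ (s + 8 ≤ 2 * codeg F x u ∧ s + 8 ≤ 2 * codeg F x v) := by
        rintro ⟨ku, kv⟩
        apply hBK
        rw [← card_pair huv]
        apply card_le_card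
        intro t ht
        rw [mem_inter, hK, mem_filter]
        simp only [mem_insert, mem_singleton] at ht
        rcases ht with rfl | rfl
        · exact ⟨huB, hV _ huB, hxne _ huB, ku⟩
        · exact ⟨hvB, hV _ hvB, hxne _ hvB, kv⟩
      omega
    refine (card_le_card hsub).trans ?_
    rw [card_powersetCard]
    exact (Nat.choose_le_choose 3 hNc).trans (by decide)
  unfold deg at hdeg
  omega

end Bounds

end AlmostIntersecting

open AlmostIntersecting Finset in
/-- Let `s > 625` and let `F` be a 3-uniform `[0,s]`-almost intersecting
hypergraph such that for every edge `e ∈ F` and every two vertices `x, y ∈ e`, there is an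
edge of `F` disjoint from `{x,y}`. Then `F` has at most `6s+10` edges. -/
theorem stmt_16 {α : Type*} [DecidableEq α] (s : ℕ) (hs : 625 < s)
    (F : Finset (Finset α))
    (huniform : ∀ A ∈ F, A.card = 3)
    (hai : ∀ A ∈ F, (F.filter fun B => Disjoint A B).card ≤ s)
    (hpair : ∀ e ∈ F, ∀ x ∈ e, ∀ y ∈ e, x ≠ y → ∃ g ∈ F, x ∉ g ∧ y ∉ g) :
    F.card ≤ 6 * s + 10 := by
  by_contra! hF
  have hcod : ∀ x y : α, x ≠ y → codeg F x y ≤ s + 3 := fun x y =>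
    codeg_le huniform hai hpair
  obtain ⟨e₀, he₀⟩ : F.Nonempty := card_pos.1 (by omega)
  obtain ⟨x, hxV, hmaxV⟩ := exists_max_image (F.biUnion id) (deg F) (by
    obtain ⟨v, hv⟩ : e₀.Nonempty := card_pos.1 (by rw [huniform e₀ he₀]; omega)
    exact ⟨v, mem_biUnion.2 ⟨e₀, he₀, hv⟩⟩)
  have hmax : ∀ y, deg F y ≤ deg F x := by
    intro y
    by_cases hy : y ∈ F.biUnion id
    · exact hmaxV y hy
    · have : deg F y = 0 := by
        rw [deg, card_eq_zero, filter_eq_empty_iff]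
        exact fun e he hye => hy (mem_biUnion.2 ⟨e, he, hye⟩)
      omega
  obtain ⟨B, hB, hxB⟩ : ∃ B ∈ F, x ∉ B := by
    obtain ⟨e, he, hxe⟩ := mem_biUnion.1 hxV
    obtain ⟨y, hy, hyx⟩ := exists_mem_ne (show 1 < e.card by rw [huniform e he]; omega) x
    obtain ⟨g, hg, hxg, -⟩ := hpair e he x hxe y hy hyx.symm
    exact ⟨g, hg, hxg⟩
  have hdeg := deg_le huniform hai hcod hB hxB
  have hlarge := le_deg_of_max hs huniform hai hF hmax hB hxB
  obtain ⟨a, b, c, ⟨hxa, ha⟩, ⟨hxb, hb⟩, ⟨hxc, hc⟩, hab, hac, hbc⟩ :=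
    exists_three_heavy hs huniform hai hcod hF hlarge hdeg
  have htwo : ∀ e ∈ F, x ∉ e → (a ∈ e ∧ b ∈ e) ∨ (a ∈ e ∧ c ∈ e) ∨ (b ∈ e ∧ c ∈ e) := by
    intro e he hxe
    have h1 := mem_or_mem_of_codeg huniform hai hxa hxb hab (by omega) he hxe
    have h2 := mem_or_mem_of_codeg huniform hai hxa hxc hac (by omega) he hxe
    have h3 := mem_or_mem_of_codeg huniform hai hxb hxc hbc (by omega) he hxe
    tauto
  have hone : ∀ e ∈ F, x ∈ e → a ∈ e ∨ b ∈ e ∨ c ∈ e := by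
    intro e he hxe
    by_contra! habc
    obtain ⟨hae, hbe, hce⟩ := habc
    have h0 := card_filter_add_card_filter_not (s := F) (fun f => x ∈ f)
    have h1 := card_filter_le hai (fun f => x ∉ f) he
    have hcard : (e.erase x).card = 2 := by rw [card_erase_of_mem hxe, huniform e he]
    have hab' := card_pair_meeting_le (T := e.erase x) huniform hab (by simp [hae]) (by simp [hbe])
    have hac' := card_pair_meeting_le (T := e.erase x) huniform hac (by simp [hae]) (by simp [hce])
    have hbc' := card_pair_meeting_le (T := e.erase x) huniform hbc (by simp [hbe]) (by simp [hce])
    have hsub : (F.filter fun f => x ∉ f ∧ ¬ Disjoint e f) ⊆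
        (F.filter fun f => (a ∈ f ∧ b ∈ f) ∧ ¬ Disjoint (e.erase x) f) ∪
        ((F.filter fun f => (a ∈ f ∧ c ∈ f) ∧ ¬ Disjoint (e.erase x) f) ∪
        (F.filter fun f => (b ∈ f ∧ c ∈ f) ∧ ¬ Disjoint (e.erase x) f)) := by
      intro f hf
      simp only [mem_filter] at hf
      obtain ⟨hfF, hxf, hef⟩ := hf
      have hd : ¬ Disjoint (e.erase x) f := by
        obtain ⟨z, hze, hzf⟩ := not_disjoint_iff.1 hef
        exact not_disjoint_iff.2 ⟨z, mem_erase.2 ⟨fun h => hxf (h ▸ hzf), hze⟩, hzf⟩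
      have := htwo f hfF hxf
      simp only [mem_union, mem_filter]
      rcases this with h | h | h
      · exact Or.inl ⟨hfF, h, hd⟩
      · exact Or.inr (Or.inl ⟨hfF, h, hd⟩)
      · exact Or.inr (Or.inr ⟨hfF, h, hd⟩)
    have h2 := (card_le_card hsub).trans ((card_union_le _ _).trans
      (Nat.add_le_add hab' ((card_union_le _ _).trans (Nat.add_le_add hac' hbc'))))
    unfold deg at hdeg
    omega
  have := card_le_of_two_of_four (by omega) huniform hai hcod hxa hxb hxc hab hac hbc
    fun e he => by
      by_cases hx : x ∈ e
      · rcases hone e he hx with h | h | h <;> simp [hx, h]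
      · rcases htwo e he hx with h | h | h <;> simp [h.1, h.2]
  omega
end
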